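/- arXiv:1403.7498 — 6 statements merged into one kernel-verified Lean document; each statement's English description precedes it below -/
import Mathlib

section
/- For every pair (α,β) of deterministic strategies of the two players, there exists a unique (up to almost-everywhere equality) pair of controls (u,v) ∈ 𝒰(t₀)×𝒱(t₀) such that α(v) = u almost everywhere on [t₀,1] and β(u) = v almost everywhere on [t₀,1]. -/
open MeasureTheory

/-- A deterministic strategy, for the player who observes the opponent's controls
(Lebesgue-measurable maps `[t₀,1] → A`) and answers with controls with values in `B`.
It comes with a finite partition `t₀ = s 0 < s 1 < ⋯ < s N = 1` such that if two
controls of the opponent agree a.e. on `[s 0, s m]`, then the answers agree a.e. on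
`[s 0, s (m+1)]`.  Controls are identified up to a.e. equality on `[t₀,1]`, and a
strategy maps (classes of) measurable controls to (classes of) measurable controls. -/
structure DetStrategy (t₀ : ℝ) (A B : Type*) [MeasurableSpace A] [MeasurableSpace B] where
  toFun : (ℝ → A) → (ℝ → B)
  maps_controls : ∀ v : ℝ → A, Measurable v → Measurable (toFun v)
  N : ℕ
  Npos : 0 < N
  s : ℕ → ℝ
  s_zero : s 0 = t₀
  s_last : s N = 1
  s_mono : ∀ m < N, s m < s (m + 1)
  nonanticipative : ∀ m < N, ∀ v₁ v₂ : ℝ → A,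
    (v₁ =ᵐ[volume.restrict (Set.Icc t₀ (s m))] v₂) →
    (toFun v₁ =ᵐ[volume.restrict (Set.Icc t₀ (s (m + 1)))] toFun v₂)

/-- The partition points lie before the end time. -/
lemma DetStrategy.s_le_one {t₀ : ℝ} {A B : Type*} [MeasurableSpace A] [MeasurableSpace B]
    (α : DetStrategy t₀ A B) (m : ℕ) (hm : m ≤ α.N) : α.s m ≤ 1 := by
  induction hm using Nat.decreasingInduction with
  | self => exact α.s_last.le
  | of_succ k hk ih => exact (α.s_mono k hk).le.trans ih

lemma ae_eq_mono_Icc {t₀ a b : ℝ} {A : Type*} {f g : ℝ → A} (hab : a ≤ b)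
    (h : f =ᵐ[volume.restrict (Set.Icc t₀ b)] g) :
    f =ᵐ[volume.restrict (Set.Icc t₀ a)] g :=
  ae_restrict_of_ae_restrict_of_subset (Set.Icc_subset_Icc_right hab) h

lemma ae_eq_Icc_self {t₀ : ℝ} {A : Type*} (f g : ℝ → A) :
    f =ᵐ[volume.restrict (Set.Icc t₀ t₀)] g := by
  have : (volume.restrict (Set.Icc t₀ t₀) : Measure ℝ) = 0 := by simp
  rw [this]
  simp [Filter.EventuallyEq]

/-- A strategy is nonanticipative at every time, without delay. -/
lemma DetStrategy.causal {t₀ : ℝ} {A B : Type*} [MeasurableSpace A] [MeasurableSpace B]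
    (α : DetStrategy t₀ A B) {t : ℝ} (ht : t ≤ 1) {v₁ v₂ : ℝ → A}
    (h : v₁ =ᵐ[volume.restrict (Set.Icc t₀ t)] v₂) :
    α.toFun v₁ =ᵐ[volume.restrict (Set.Icc t₀ t)] α.toFun v₂ := by
  have key : ∀ m ≤ α.N, t ≤ α.s m →
      α.toFun v₁ =ᵐ[volume.restrict (Set.Icc t₀ t)] α.toFun v₂ := by
    intro m
    induction m with
    | zero =>
      intro _ hts
      rw [α.s_zero] at hts
      exact ae_eq_mono_Icc hts (ae_eq_Icc_self _ _)
    | succ k ih =>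
      intro hk hts
      by_cases hc : t ≤ α.s k
      · exact ih (by omega) hc
      · exact ae_eq_mono_Icc hts
          (α.nonanticipative k (by omega) v₁ v₂ (ae_eq_mono_Icc (not_le.mp hc).le h))
  exact key α.N le_rfl (by rw [α.s_last]; exact ht)

/-- For every pair `(α, β)` of deterministic strategies of the two players there is a
unique (up to a.e. equality on `[t₀,1]`) pair of controls `(u, v)` such that
`α v = u` a.e. on `[t₀,1]` and `β u = v` a.e. on `[t₀,1]`. -/
theorem deterministic_strategies_fixed_point
    {U V : Type*} [MeasurableSpace U] [MeasurableSpace V] [Nonempty U] [Nonempty V]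
    {t₀ : ℝ} (ht₀ : t₀ ∈ Set.Ico (0 : ℝ) 1)
    (α : DetStrategy t₀ V U) (β : DetStrategy t₀ U V) :
    ∃ (u : ℝ → U) (v : ℝ → V),
      (Measurable u ∧ Measurable v ∧
        α.toFun v =ᵐ[volume.restrict (Set.Icc t₀ 1)] u ∧
        β.toFun u =ᵐ[volume.restrict (Set.Icc t₀ 1)] v) ∧
      (∀ (u' : ℝ → U) (v' : ℝ → V), Measurable u' → Measurable v' →
        α.toFun v' =ᵐ[volume.restrict (Set.Icc t₀ 1)] u' →
        β.toFun u' =ᵐ[volume.restrict (Set.Icc t₀ 1)] v' →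
        (u =ᵐ[volume.restrict (Set.Icc t₀ 1)] u' ∧
         v =ᵐ[volume.restrict (Set.Icc t₀ 1)] v')) := by
  have step : ∀ m < β.N, ∀ u₁ u₂ : ℝ → U,
      u₁ =ᵐ[volume.restrict (Set.Icc t₀ (β.s m))] u₂ →
      α.toFun (β.toFun u₁) =ᵐ[volume.restrict (Set.Icc t₀ (β.s (m + 1)))]
        α.toFun (β.toFun u₂) := fun m hm u₁ u₂ h =>
    α.causal (β.s_le_one (m + 1) hm) (β.nonanticipative m hm u₁ u₂ h)
  let γ : (ℝ → U) → (ℝ → U) := fun u => α.toFun (β.toFun u)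
  have iter : ∀ m ≤ β.N, ∀ u₁ u₂ : ℝ → U,
      γ^[m] u₁ =ᵐ[volume.restrict (Set.Icc t₀ (β.s m))] γ^[m] u₂ := by
    intro m
    induction m with
    | zero =>
      intro _ u₁ u₂
      rw [β.s_zero]
      exact ae_eq_Icc_self _ _
    | succ k ih =>
      intro hk u₁ u₂
      rw [Function.iterate_succ_apply', Function.iterate_succ_apply']
      exact step k hk _ _ (ih (by omega) u₁ u₂)
  obtain ⟨a⟩ := ‹Nonempty U›
  have meas : ∀ m, Measurable (γ^[m] (fun _ => a)) := by
    intro m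
    induction m with
    | zero => exact measurable_const
    | succ k ih =>
      rw [Function.iterate_succ_apply']
      exact α.maps_controls _ (β.maps_controls _ ih)
  have fix : γ (γ^[β.N] (fun _ => a)) =ᵐ[volume.restrict (Set.Icc t₀ 1)]
      γ^[β.N] (fun _ => a) := by
    rw [← Function.iterate_succ_apply' γ, Function.iterate_succ_apply]
    have := iter β.N le_rfl (γ (fun _ => a)) (fun _ => a)
    rwa [β.s_last] at this
  have hu := meas β.N
  generalize γ^[β.N] (fun _ => a) = u at fix hu
  refine ⟨u, β.toFun u, ⟨hu, β.maps_controls _ hu, fix, Filter.EventuallyEq.rfl⟩, ?_⟩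
  intro u' v' _ _ hα hβ
  have fix' : γ u' =ᵐ[volume.restrict (Set.Icc t₀ 1)] u' := (α.causal le_rfl hβ).trans hα
  have agree : ∀ m ≤ β.N, u =ᵐ[volume.restrict (Set.Icc t₀ (β.s m))] u' := by
    intro m
    induction m with
    | zero =>
      intro _
      rw [β.s_zero]
      exact ae_eq_Icc_self _ _
    | succ k ih =>
      intro hk
      have h1 := β.s_le_one (k + 1) hk
      exact (ae_eq_mono_Icc h1 fix).symm.trans
        ((step k hk _ _ (ih (by omega))).trans (ae_eq_mono_Icc h1 fix'))
  have huu := agree β.N le_rfl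
  rw [β.s_last] at huu
  exact ⟨huu, (β.causal le_rfl huu).trans hβ⟩
end

section
/- Let φ : Δ(K) → ℝ be a continuous concave function and x₀ ∈ ℝ^K. Then φ^♯ is differentiable at x₀ if and only if the map p ↦ φ(p) − ⟨x₀,p⟩ has a unique maximizer p₀ over Δ(K) and p₀ is an extreme point of φ; in this case ∇φ^♯(x₀) = −p₀, so that p₀ := −∇φ^♯(x₀) ∈ Δ(K) is an extreme point of φ. -/
/-- The upper conjugate `φ^♯(x) = sup_{p ∈ Δ(K)} φ(p) − ⟨p,x⟩` of a function defined on
the simplex `Δ(K)`. -/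
noncomputable def upperConj {K : Type*} [Fintype K] (φ : (K → ℝ) → ℝ) (x : K → ℝ) : ℝ :=
  sSup ((fun p => φ p - ∑ k, p k * x k) '' stdSimplex ℝ K)

/-- `p` is an extreme point of `φ` on `Δ(K)`: whenever `(p, φ p)` is a convex
combination, with positive weights, of points `(p_r, φ (p_r))` with `p_r ∈ Δ(K)`,
all the `p_r` equal `p`. -/
def IsExtremePointOf {K : Type*} [Fintype K] (φ : (K → ℝ) → ℝ) (p : K → ℝ) : Prop :=
  p ∈ stdSimplex ℝ K ∧
  ∀ (m : ℕ) (lam : Fin m → ℝ) (ps : Fin m → (K → ℝ)),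
    lam ∈ stdSimplex ℝ (Fin m) → (∀ r, 0 < lam r) → (∀ r, ps r ∈ stdSimplex ℝ K) →
    (∑ r, lam r • ps r) = p → (∑ r, lam r * φ (ps r)) = φ p →
    ∀ r, ps r = p


section EnvelopeHelpers

variable {K : Type*} [Fintype K]

lemma env_cont (φ : (K → ℝ) → ℝ) (hcont : ContinuousOn φ (stdSimplex ℝ K)) (x : K → ℝ) :
    ContinuousOn (fun p => φ p - ∑ k, p k * x k) (stdSimplex ℝ K) :=
  hcont.sub (by fun_prop)

lemma env_le (φ : (K → ℝ) → ℝ) (hcont : ContinuousOn φ (stdSimplex ℝ K)) (x p : K → ℝ)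
    (hp : p ∈ stdSimplex ℝ K) : φ p - ∑ k, p k * x k ≤ upperConj φ x :=
  le_csSup ((isCompact_stdSimplex ℝ K).image_of_continuousOn (env_cont φ hcont x)).bddAbove
    ⟨p, hp, rfl⟩

lemma env_attain [Nonempty K] (φ : (K → ℝ) → ℝ) (hcont : ContinuousOn φ (stdSimplex ℝ K))
    (x : K → ℝ) : ∃ p ∈ stdSimplex ℝ K, upperConj φ x = φ p - ∑ k, p k * x k := by
  classical
  have hne : (stdSimplex ℝ K).Nonempty := ⟨_, single_mem_stdSimplex ℝ (Classical.arbitrary K)⟩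
  obtain ⟨p, hp, h⟩ := (isCompact_stdSimplex ℝ K).exists_sSup_image_eq hne (env_cont φ hcont x)
  exact ⟨p, hp, h⟩

/-- The linear functional `y ↦ ⟨p, y⟩`. -/
noncomputable def envL (p : K → ℝ) : (K → ℝ) →L[ℝ] ℝ :=
  ∑ k, p k • ContinuousLinearMap.proj (R := ℝ) (φ := fun _ : K => ℝ) k

lemma envL_apply (p y : K → ℝ) : envL p y = ∑ k, p k * y k := by
  simp [envL, ContinuousLinearMap.sum_apply]

lemma env_deriv (φ : (K → ℝ) → ℝ) (hcont : ContinuousOn φ (stdSimplex ℝ K)) (x₀ p : K → ℝ)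
    (hp : p ∈ stdSimplex ℝ K) (hmax : upperConj φ x₀ = φ p - ∑ k, p k * x₀ k)
    (hd : DifferentiableAt ℝ (upperConj φ) x₀) (y : K → ℝ) :
    fderiv ℝ (upperConj φ) x₀ y = -∑ k, p k * y k := by
  have h1 : IsLocalMin (fun x => upperConj φ x + envL p x) x₀ := by
    refine Filter.Eventually.of_forall fun x => ?_
    have := env_le φ hcont x p hp
    simp only [envL_apply]
    linarith
  have h2 := hd.hasFDerivAt.add (envL p).hasFDerivAt
  have h3 := h1.hasFDerivAt_eq_zero h2
  have h4 := congrArg (fun L => L y) h3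
  simp [envL_apply] at h4
  linarith

lemma env_abs_le (p y : K → ℝ) (hp : p ∈ stdSimplex ℝ K) : |∑ k, p k * y k| ≤ ‖y‖ := by
  calc |∑ k, p k * y k| ≤ ∑ k, |p k * y k| := Finset.abs_sum_le_sum_abs _ _
    _ ≤ ∑ k, p k * ‖y‖ := by
        refine Finset.sum_le_sum fun k _ => ?_
        rw [abs_mul, abs_of_nonneg (hp.1 k)]
        exact mul_le_mul_of_nonneg_left (norm_le_pi_norm y k) (hp.1 k)
    _ = ‖y‖ := by rw [← Finset.sum_mul, hp.2, one_mul]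

lemma env_near (φ : (K → ℝ) → ℝ) (hcont : ContinuousOn φ (stdSimplex ℝ K)) (x₀ p₀ : K → ℝ)
    (hp₀ : p₀ ∈ stdSimplex ℝ K)
    (huniq : ∀ p ∈ stdSimplex ℝ K, p ≠ p₀ →
      φ p - ∑ k, p k * x₀ k < φ p₀ - ∑ k, p₀ k * x₀ k) (ε : ℝ) (hε : 0 < ε) :
    ∃ δ > 0, ∀ x, ‖x - x₀‖ < δ → ∀ p ∈ stdSimplex ℝ K,
      upperConj φ x = φ p - ∑ k, p k * x k → ‖p₀ - p‖ < ε := by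
  have hS : IsCompact (stdSimplex ℝ K ∩ {p | ε ≤ ‖p₀ - p‖}) :=
    (isCompact_stdSimplex ℝ K).inter_right (isClosed_le (by fun_prop) (by fun_prop))
  rcases (stdSimplex ℝ K ∩ {p | ε ≤ ‖p₀ - p‖}).eq_empty_or_nonempty with he | hne
  · refine ⟨1, one_pos, fun x _ p hp _ => ?_⟩
    by_contra hc
    exact (he ▸ (⟨hp, not_lt.1 hc⟩ : p ∈ stdSimplex ℝ K ∩ {p | ε ≤ ‖p₀ - p‖}) : p ∈ (∅ : Set _))
  · obtain ⟨q, ⟨hq, hqε⟩, hqm⟩ := hS.exists_isMaxOn hne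
      ((env_cont φ hcont x₀).mono Set.inter_subset_left)
    have hqne : q ≠ p₀ := by
      rintro rfl
      simp at hqε
      linarith
    have hgap := huniq q hq hqne
    refine ⟨((φ p₀ - ∑ k, p₀ k * x₀ k) - (φ q - ∑ k, q k * x₀ k)) / 2, by linarith,
      fun x hx p hp hpx => ?_⟩
    by_contra hc
    have h1 : φ p - ∑ k, p k * x₀ k ≤ φ q - ∑ k, q k * x₀ k := hqm ⟨hp, not_lt.1 hc⟩
    have h2 := env_le φ hcont x p₀ hp₀
    have h3 := abs_le.1 (env_abs_le p (x - x₀) hp)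
    have h4 := abs_le.1 (env_abs_le p₀ (x - x₀) hp₀)
    simp only [Pi.sub_apply, mul_sub, Finset.sum_sub_distrib] at h3 h4
    linarith [h3.1, h4.2]

lemma env_hasFDerivAt [Nonempty K] (φ : (K → ℝ) → ℝ) (hcont : ContinuousOn φ (stdSimplex ℝ K))
    (x₀ p₀ : K → ℝ) (hp₀ : p₀ ∈ stdSimplex ℝ K)
    (huniq : ∀ p ∈ stdSimplex ℝ K, p ≠ p₀ →
      φ p - ∑ k, p k * x₀ k < φ p₀ - ∑ k, p₀ k * x₀ k)
    (hmax : upperConj φ x₀ = φ p₀ - ∑ k, p₀ k * x₀ k) :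
    HasFDerivAt (upperConj φ) (-envL p₀) x₀ := by
  rw [hasFDerivAt_iff_isLittleO, Asymptotics.isLittleO_iff]
  intro c hc
  have hN : (0 : ℝ) < Fintype.card K := by exact_mod_cast Fintype.card_pos
  obtain ⟨δ, hδ, hnear⟩ := env_near φ hcont x₀ p₀ hp₀ huniq (c / Fintype.card K) (by positivity)
  filter_upwards [Metric.ball_mem_nhds x₀ hδ] with x hx
  rw [mem_ball_iff_norm] at hx
  obtain ⟨p, hp, hpx⟩ := env_attain φ hcont x
  have hpp := hnear x hx p hp hpx
  have h1 := env_le φ hcont x p₀ hp₀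
  have h2 := env_le φ hcont x₀ p hp
  have h3 : ∑ k, (p₀ k - p k) * (x k - x₀ k) ≤ c * ‖x - x₀‖ := by
    calc ∑ k, (p₀ k - p k) * (x k - x₀ k)
        ≤ ∑ _k : K, c / Fintype.card K * ‖x - x₀‖ := by
          refine Finset.sum_le_sum fun k _ => ?_
          refine (le_abs_self _).trans ?_
          rw [abs_mul]
          exact mul_le_mul ((norm_le_pi_norm (p₀ - p) k).trans hpp.le)
            (norm_le_pi_norm (x - x₀) k) (abs_nonneg _) (by positivity)
      _ = c * ‖x - x₀‖ := by
          rw [Finset.sum_const, Finset.card_univ, nsmul_eq_mul]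
          field_simp
  have h4 : (-envL p₀) (x - x₀) = -(∑ k, p₀ k * x k - ∑ k, p₀ k * x₀ k) := by
    simp [envL_apply, mul_sub, Finset.sum_sub_distrib]
  simp only [sub_mul, mul_sub, Finset.sum_sub_distrib] at h3
  rw [h4, Real.norm_eq_abs, abs_le]
  have : 0 ≤ c * ‖x - x₀‖ := by positivity
  constructor <;> linarith

end EnvelopeHelpers

/-- Envelope theorem: for a continuous concave `φ : Δ(K) → ℝ`, the conjugate `φ^♯` is
differentiable at `x₀` iff `p ↦ φ(p) − ⟨x₀,p⟩` has a unique maximizer `p₀` on `Δ(K)`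
and `p₀` is an extreme point of `φ`; in that case `∇φ^♯(x₀) = −p₀`. -/
theorem envelope_differentiability {K : Type*} [Fintype K] [Nonempty K]
    (φ : (K → ℝ) → ℝ) (hconc : ConcaveOn ℝ (stdSimplex ℝ K) φ)
    (hcont : ContinuousOn φ (stdSimplex ℝ K)) (x₀ : K → ℝ) :
    (DifferentiableAt ℝ (upperConj φ) x₀ ↔
      ∃ p₀ ∈ stdSimplex ℝ K,
        (∀ p ∈ stdSimplex ℝ K, p ≠ p₀ →
          φ p - ∑ k, x₀ k * p k < φ p₀ - ∑ k, x₀ k * p₀ k) ∧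
        IsExtremePointOf φ p₀) ∧
    (∀ p₀ ∈ stdSimplex ℝ K,
      (∀ p ∈ stdSimplex ℝ K, p ≠ p₀ →
          φ p - ∑ k, x₀ k * p k < φ p₀ - ∑ k, x₀ k * p₀ k) →
      DifferentiableAt ℝ (upperConj φ) x₀ →
      ∀ y : K → ℝ, fderiv ℝ (upperConj φ) x₀ y = -∑ k, p₀ k * y k) := by
  classical
  have hcomm : ∀ p : K → ℝ, ∑ k, x₀ k * p k = ∑ k, p k * x₀ k := fun p =>
    Finset.sum_congr rfl fun k _ => mul_comm _ _
  simp only [hcomm]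
  have hmaxeq : ∀ p₀ ∈ stdSimplex ℝ K,
      (∀ p ∈ stdSimplex ℝ K, p ≠ p₀ →
        φ p - ∑ k, p k * x₀ k < φ p₀ - ∑ k, p₀ k * x₀ k) →
      upperConj φ x₀ = φ p₀ - ∑ k, p₀ k * x₀ k := by
    intro p₀ hp₀ hu
    obtain ⟨p, hp, hpx⟩ := env_attain φ hcont x₀
    by_cases h : p = p₀
    · rw [hpx, h]
    · have := hu p hp h
      have := env_le φ hcont x₀ p₀ hp₀
      linarith
  refine ⟨⟨fun hd => ?_, ?_⟩, ?_⟩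
  · obtain ⟨p₀, hp₀, hpx⟩ := env_attain φ hcont x₀
    have key : ∀ p ∈ stdSimplex ℝ K, upperConj φ x₀ = φ p - ∑ k, p k * x₀ k → p = p₀ := by
      intro p hp h
      funext k
      have h1 := env_deriv φ hcont x₀ p hp h hd (Pi.single k 1)
      have h2 := env_deriv φ hcont x₀ p₀ hp₀ hpx hd (Pi.single k 1)
      rw [h1] at h2
      simpa [Pi.single_apply] using h2
    refine ⟨p₀, hp₀, fun p hp hne => ?_, hp₀, ?_⟩
    · rw [← hpx]
      exact lt_of_le_of_ne (env_le φ hcont x₀ p hp) fun h => hne (key p hp h.symm)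
    · intro m lam ps hlam hpos hps hsum hφ r
      refine key _ (hps r) ?_
      have hlin : ∑ r, lam r * (∑ k, ps r k * x₀ k) = ∑ k, p₀ k * x₀ k := by
        rw [← hsum]
        simp only [Finset.sum_apply, Pi.smul_apply, smul_eq_mul, Finset.sum_mul, Finset.mul_sum]
        rw [Finset.sum_comm]
        simp only [mul_assoc]
      have hz : ∑ r, lam r * (upperConj φ x₀ - (φ (ps r) - ∑ k, ps r k * x₀ k)) = 0 := by
        simp only [mul_sub, Finset.sum_sub_distrib]
        rw [hlin, hφ, ← Finset.sum_mul, hlam.2, hpx]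
        ring
      have hr := (Finset.sum_eq_zero_iff_of_nonneg fun i _ =>
        mul_nonneg (hpos i).le (sub_nonneg.2 (env_le φ hcont x₀ _ (hps i)))).1 hz r
          (Finset.mem_univ r)
      rcases mul_eq_zero.1 hr with h | h
      · exact absurd h (hpos r).ne'
      · linarith
  · rintro ⟨p₀, hp₀, hu, -⟩
    exact (env_hasFDerivAt φ hcont x₀ p₀ hp₀ hu (hmaxeq p₀ hp₀ hu)).differentiableAt
  · intro p₀ hp₀ hu hd y
    exact env_deriv φ hcont x₀ p₀ hp₀ (hmaxeq p₀ hp₀ hu) hd y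
end

section
/- Let X be a nonempty set, L a finite nonempty set, F : X × Δ(L) → ℝ such that F(x,·) is convex on Δ(L) for every x ∈ X, G : Δ(L) → ℝ convex, and ψ : X → ℝ. Suppose (x*,q*) ∈ X × Δ(L) maximizes (x,q) ↦ G(q) − F(x,q) + ψ(x) over X × Δ(L) and that ψ(x*) = 0. Let η ∈ ℝ^L be a subgradient of G at q*, i.e. G(q) ≥ G(q*) + ⟨η, q − q*⟩ for all q ∈ Δ(L). Then η is also a subgradient of F(x*,·) at q*, and for every x ∈ X one has F^♭(x, −η) ≥ F^♭(x*, −η) + ψ(x), with equality when x = x*, where F^♭(x, η') := inf_{q∈Δ(L)} F(x,q) + ⟨q, η'⟩. -/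
/-- `F^♭(x, η') = inf_{q ∈ Δ(L)} F(x,q) + ⟨q, η'⟩`. -/
noncomputable def Fflat {X L : Type*} [Fintype L]
    (F : X → (L → ℝ) → ℝ) (x : X) (η : L → ℝ) : ℝ :=
  sInf ((fun q => F x q + ∑ l, q l * η l) '' stdSimplex ℝ L)

/-- Key dual test-function construction of the comparison principle: if `(x*, q*)`
maximizes `(x,q) ↦ G(q) − F(x,q) + ψ(x)` over `X × Δ(L)`, `ψ(x*) = 0`, and `η` is a
subgradient of `G` at `q*`, then `η` is a subgradient of `F(x*, ·)` at `q*`, and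
`F^♭(x, −η) ≥ F^♭(x*, −η) + ψ(x)` for every `x`, with equality at `x = x*`. -/
theorem dual_test_function {X : Type*} [Nonempty X] {L : Type*} [Fintype L] [Nonempty L]
    (F : X → (L → ℝ) → ℝ) (hF : ∀ x : X, ConvexOn ℝ (stdSimplex ℝ L) (F x))
    (G : (L → ℝ) → ℝ) (hG : ConvexOn ℝ (stdSimplex ℝ L) G)
    (ψ : X → ℝ)
    (xs : X) (qs : L → ℝ) (hqs : qs ∈ stdSimplex ℝ L)
    (hmax : ∀ x : X, ∀ q ∈ stdSimplex ℝ L,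
      G q - F x q + ψ x ≤ G qs - F xs qs + ψ xs)
    (hψ : ψ xs = 0)
    (η : L → ℝ)
    (hη : ∀ q ∈ stdSimplex ℝ L, G qs + ∑ l, η l * (q l - qs l) ≤ G q) :
    (∀ q ∈ stdSimplex ℝ L, F xs qs + ∑ l, η l * (q l - qs l) ≤ F xs q) ∧
    (∀ x : X, Fflat F xs (-η) + ψ x ≤ Fflat F x (-η)) ∧
    (Fflat F xs (-η) = Fflat F xs (-η) + ψ xs) := by
  have key : ∀ x : X, ∀ q ∈ stdSimplex ℝ L,
      F xs qs + ∑ l, qs l * (-η) l + ψ x ≤ F x q + ∑ l, q l * (-η) l := by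
    intro x q hq
    have h1 := hmax x q hq
    have h2 := hη q hq
    have h3 : ∑ l, η l * (q l - qs l) = ∑ l, qs l * (-η) l - ∑ l, q l * (-η) l := by
      rw [← Finset.sum_sub_distrib]
      refine Finset.sum_congr rfl fun l _ => ?_
      simp only [Pi.neg_apply]
      ring
    linarith
  refine ⟨?_, ?_, by rw [hψ, add_zero]⟩
  · intro q hq
    have h1 := hmax xs q hq
    have h2 := hη q hq
    linarith
  · intro x
    have hle : Fflat F xs (-η) ≤ F xs qs + ∑ l, qs l * (-η) l := by
      refine csInf_le ⟨F xs qs + ∑ l, qs l * (-η) l + ψ xs, ?_⟩ ⟨qs, hqs, rfl⟩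
      rintro _ ⟨q, hq, rfl⟩
      exact key xs q hq
    refine le_csInf ⟨_, qs, hqs, rfl⟩ ?_
    rintro _ ⟨q, hq, rfl⟩
    have := key x q hq
    exact le_trans (by linarith) this
end

section
/- Let u : Δ(K×L) → ℝ be continuous and let W : Δ(K×L) → ℝ be Lipschitz continuous and K-concave, i.e. p ↦ W(p⊗Q) is concave on Δ(K) for every Q ∈ Δ(L)^K. Assume that for every Q ∈ Δ(L)^K, the convex function ζ ↦ W_K^♯(ζ,Q) := sup_{p∈Δ(K)} W(p⊗Q) − ⟨p,ζ⟩ is a viscosity sub-solution on ℝ^K of −w(ζ) + ⟨Dw(ζ),ζ⟩ + u_K(−Dw(ζ),Q) ≥ 0, meaning: for every C¹ function φ : ℝ^K → ℝ such that W_K^♯(·,Q) − φ has a local maximum at ζ ∈ ℝ^K, one has −W_K^♯(ζ,Q) + ⟨Dφ(ζ),ζ⟩ + u(−Dφ(ζ) ⊗ Q) ≥ 0 (in particular −Dφ(ζ) ∈ Δ(K) whenever this expression is required to make sense, which holds at such points). If, for some Q₀ ∈ Δ(L)^K, the map ζ ↦ W_K^♯(ζ,Q₀) is differentiable at ζ₀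 ∈ ℝ^K, then p₀ := −∇_ζ W_K^♯(ζ₀,Q₀) belongs to Δ(K) and W(p₀⊗Q₀) ≤ u(p₀⊗Q₀). -/
/-- `p ⊗ Q ∈ Δ(K×L)`: `(p ⊗ Q)(k,ℓ) = p(k) Q(k)(ℓ)`. -/
def tensKQ {K L : Type*} (p : K → ℝ) (Q : K → L → ℝ) : (K × L) → ℝ :=
  fun kl => p kl.1 * Q kl.1 kl.2

/-- `W_K^♯(ζ, Q) = sup_{p ∈ Δ(K)} W(p⊗Q) − ⟨p, ζ⟩`. -/
noncomputable def WsharpK {K L : Type*} [Fintype K]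
    (W : ((K × L) → ℝ) → ℝ) (ζ : K → ℝ) (Q : K → L → ℝ) : ℝ :=
  sSup ((fun p => W (tensKQ p Q) - ∑ k, p k * ζ k) '' stdSimplex ℝ K)

open Filter Topology

lemma aux_tens_mem {K L : Type*} [Fintype K] [Fintype L] {p : K → ℝ} {Q : K → L → ℝ}
    (hp : p ∈ stdSimplex ℝ K) (hQ : ∀ k, Q k ∈ stdSimplex ℝ L) :
    tensKQ p Q ∈ stdSimplex ℝ (K × L) := by
  refine ⟨fun kl => mul_nonneg (hp.1 _) ((hQ _).1 _), ?_⟩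
  rw [Fintype.sum_prod_type]
  simp only [tensKQ]
  simp_rw [← Finset.mul_sum, (hQ _).2, mul_one]
  exact hp.2

lemma aux_tens_cont {K L : Type*} (Q : K → L → ℝ) :
    Continuous (fun p : K → ℝ => tensKQ p Q) := by
  unfold tensKQ
  fun_prop

lemma aux_grad {K : Type*} [Fintype K] (f F : (K → ℝ) → ℝ) (F' : (K → ℝ) →L[ℝ] ℝ)
    (ζ p : K → ℝ) (c : ℝ) (h0 : f ζ = c - ∑ k, p k * ζ k)
    (hle : ∀ z, c - ∑ k, p k * z k ≤ f z)
    (hF : HasFDerivAt F F' ζ) (hmax : IsLocalMax (fun z => f z - F z) ζ) (v : K → ℝ) :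
    F' v = - ∑ k, p k * v k := by
  let l : (K → ℝ) →L[ℝ] ℝ := ∑ k, p k • ContinuousLinearMap.proj k
  have hl : ∀ z, l z = ∑ k, p k * z k := fun z => by simp [l]
  have hmin : IsLocalMin (fun z => F z + l z) ζ := by
    filter_upwards [hmax] with z hz
    have := hle z
    simp only [hl]
    linarith
  have h := hmin.hasFDerivAt_eq_zero (hF.add l.hasFDerivAt)
  have h2 := congrArg (fun T : (K → ℝ) →L[ℝ] ℝ => T v) h
  simp only [add_apply, hl, zero_apply] at h2
  linarith

lemma aux_att {K : Type*} [Fintype K] [Nonempty K] (G : (K → ℝ) → ℝ)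
    (hG : ContinuousOn G (stdSimplex ℝ K)) (f : (K → ℝ) → ℝ)
    (hf : ∀ z, f z = sSup ((fun p => G p - ∑ k, p k * z k) '' stdSimplex ℝ K)) :
    (∀ z, ∃ p ∈ stdSimplex ℝ K, f z = G p - ∑ k, p k * z k) ∧
    (∀ p ∈ stdSimplex ℝ K, ∀ z, G p - ∑ k, p k * z k ≤ f z) := by
  classical
  have hc : ∀ z : K → ℝ, ContinuousOn (fun p => G p - ∑ k, p k * z k) (stdSimplex ℝ K) :=
    fun z => hG.sub (Continuous.continuousOn (by fun_prop))
  have hne : (stdSimplex ℝ K).Nonempty := 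
    ⟨_, single_mem_stdSimplex ℝ (Classical.arbitrary K)⟩
  constructor
  · intro z
    obtain ⟨p, hp, h⟩ := (isCompact_stdSimplex ℝ K).exists_sSup_image_eq hne (hc z)
    exact ⟨p, hp, by rw [hf, h]⟩
  · intro p hp z
    rw [hf]
    exact le_csSup ((isCompact_stdSimplex ℝ K).image_of_continuousOn (hc z)).bddAbove ⟨p, hp, rfl⟩

lemma aux_cont {K : Type*} [Fintype K] (G : (K → ℝ) → ℝ) (f : (K → ℝ) → ℝ)
    (h1 : ∀ z, ∃ p ∈ stdSimplex ℝ K, f z = G p - ∑ k, p k * z k)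
    (h2 : ∀ p ∈ stdSimplex ℝ K, ∀ z, G p - ∑ k, p k * z k ≤ f z) : Continuous f := by
  have : LipschitzWith 1 f := by
    apply LipschitzWith.of_le_add
    intro x y
    obtain ⟨p, hp, h⟩ := h1 x
    have h3 := h2 p hp y
    have h4 : ∑ k, p k * (y k - x k) ≤ ∑ k, p k * dist x y := by
      refine Finset.sum_le_sum fun k _ => mul_le_mul_of_nonneg_left ?_ (hp.1 k)
      refine le_trans (le_abs_self _) ?_
      rw [abs_sub_comm, ← Real.dist_eq]
      exact dist_le_pi_dist x y k
    rw [← Finset.sum_mul, hp.2, one_mul] at h4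
    simp only [mul_sub, Finset.sum_sub_distrib] at h4
    linarith
  exact this.continuous

lemma aux_q {K : Type*} [Fintype K] (d : K → ℝ) : ‖d‖ ^ 2 ≤ ∑ k, d k ^ 2 := by
  have h0 : 0 ≤ ∑ k, d k ^ 2 := Finset.sum_nonneg fun k _ => sq_nonneg _
  have : ‖d‖ ≤ √(∑ k, d k ^ 2) := by
    rw [pi_norm_le_iff_of_nonneg (Real.sqrt_nonneg _)]
    intro k
    apply Real.le_sqrt_of_sq_le
    rw [Real.norm_eq_abs, sq_abs]
    exact Finset.single_le_sum (f := fun k => d k ^ 2) (fun i _ => sq_nonneg _) (Finset.mem_univ k)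
  calc ‖d‖ ^ 2 ≤ (√(∑ k, d k ^ 2)) ^ 2 := by gcongr
    _ = _ := Real.sq_sqrt h0

/-- Perturbed quadratic test functions: near a differentiability point there is a `C¹` function
touching from above with nearby gradient. -/
lemma aux_touch {K : Type*} [Fintype K] (f : (K → ℝ) → ℝ) (hf : Continuous f)
    (ζ₀ : K → ℝ) (f' : (K → ℝ) →L[ℝ] ℝ) (hd : HasFDerivAt f f' ζ₀) (ε : ℝ) (hε : 0 < ε) :
    ∃ φ : (K → ℝ) → ℝ, ContDiff ℝ 1 φ ∧ ∃ ζ, IsLocalMax (fun z => f z - φ z) ζ ∧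
      ∀ v : K → ℝ, ‖v‖ ≤ 1 → |fderiv ℝ φ ζ v - f' v| ≤ 2 * ε * Fintype.card K := by
  have hb := hd.isLittleO.def hε
  obtain ⟨s, hs, hb⟩ := Metric.eventually_nhds_iff.1 hb
  obtain ⟨r, hr, hrs⟩ : ∃ r, 0 < r ∧ r < s := ⟨s / 2, by linarith, by linarith⟩
  let M : ℝ := 2 * ε / r
  have hM : 0 < M := by positivity
  have hMr : M * r = 2 * ε := by simp only [M]; field_simp
  let φ : (K → ℝ) → ℝ := fun z => f' z + M * ∑ k, (z k - ζ₀ k) ^ 2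
  have hφ : ContDiff ℝ 1 φ := by
    apply ContDiff.add f'.contDiff
    apply ContDiff.mul contDiff_const
    apply ContDiff.sum
    intro k _
    exact ((contDiff_apply ℝ ℝ k).sub contDiff_const).pow 2
  obtain ⟨ζ, hζ, hmax⟩ := (isCompact_closedBall ζ₀ r).exists_isMaxOn
    ⟨ζ₀, Metric.mem_closedBall_self hr.le⟩ (hf.sub hφ.continuous).continuousOn
  have hmax0 : f ζ₀ - φ ζ₀ ≤ f ζ - φ ζ := hmax (Metric.mem_closedBall_self hr.le)
  have hζr : ‖ζ - ζ₀‖ ≤ r := by rw [← dist_eq_norm]; exact hζ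
  have hbζ := hb (lt_of_le_of_lt (Metric.mem_closedBall.1 hζ) hrs)
  have hbζ' := le_trans (le_abs_self _) hbζ
  have hq : ‖ζ - ζ₀‖ ^ 2 ≤ ∑ k, (ζ k - ζ₀ k) ^ 2 := aux_q (ζ - ζ₀)
  have hMd : M * ‖ζ - ζ₀‖ ^ 2 ≤ ε * ‖ζ - ζ₀‖ := by
    have := mul_le_mul_of_nonneg_left hq hM.le
    simp only [φ, sub_self] at hmax0
    simp only [map_sub] at hbζ'
    simp at hmax0
    linarith
  have hMd' : M * ‖ζ - ζ₀‖ ≤ ε := by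
    rcases (norm_nonneg (ζ - ζ₀)).eq_or_lt with h | h
    · rw [← h]; simp [hε.le]
    · nlinarith
  have hlt : ‖ζ - ζ₀‖ < r := by
    by_contra hcon
    have : ‖ζ - ζ₀‖ = r := le_antisymm hζr (not_lt.1 hcon)
    rw [this, hMr] at hMd'
    linarith
  refine ⟨φ, hφ, ζ, hmax.isLocalMax ?_, ?_⟩
  · exact Filter.mem_of_superset (Metric.isOpen_ball.mem_nhds (by
      rw [Metric.mem_ball, dist_eq_norm]; exact hlt)) Metric.ball_subset_closedBall
  · intro v hv
    have hφ' : HasFDerivAt φ (f' + M • ∑ k, (2 * (ζ k - ζ₀ k)) •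
        (ContinuousLinearMap.proj k : (K → ℝ) →L[ℝ] ℝ)) ζ := by
      apply f'.hasFDerivAt.add
      apply HasFDerivAt.const_mul
      apply HasFDerivAt.fun_sum
      intro k _
      have := ((hasFDerivAt_apply (𝕜 := ℝ) k ζ).sub_const (ζ₀ k)).pow 2
      simpa using this
    rw [hφ'.fderiv]
    have : (f' + M • ∑ k, (2 * (ζ k - ζ₀ k)) •
        (ContinuousLinearMap.proj k : (K → ℝ) →L[ℝ] ℝ)) v - f' v
        = ∑ k, M * (2 * (ζ k - ζ₀ k) * v k) := by
      simp [Finset.mul_sum]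
    rw [this]
    refine le_trans (Finset.abs_sum_le_sum_abs _ _) ?_
    have : ∀ k ∈ (Finset.univ : Finset K), |M * (2 * (ζ k - ζ₀ k) * v k)| ≤ 2 * ε := by
      intro k _
      have a1 : |ζ k - ζ₀ k| ≤ ‖ζ - ζ₀‖ := norm_le_pi_norm (ζ - ζ₀) k
      have a2 : |v k| ≤ 1 := (norm_le_pi_norm v k).trans hv
      rw [abs_mul, abs_mul, abs_mul, abs_of_pos hM, abs_two]
      calc M * (2 * |ζ k - ζ₀ k| * |v k|) ≤ M * (2 * ‖ζ - ζ₀‖ * 1) := by gcongr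
        _ ≤ 2 * ε := by linarith
    refine (Finset.sum_le_sum this).trans ?_
    simp [mul_comm]

/-- If `W` is Lipschitz, `K`-concave, and for every `Q` the map `ζ ↦ W_K^♯(ζ,Q)` is a
viscosity sub-solution of `−w(ζ) + ⟨Dw(ζ),ζ⟩ + u_K(−Dw(ζ),Q) ≥ 0` on `ℝ^K`, then at
any point `ζ₀` of differentiability of `ζ ↦ W_K^♯(ζ,Q₀)` one has
`p₀ := −∇_ζ W_K^♯(ζ₀,Q₀) ∈ Δ(K)` and `W(p₀⊗Q₀) ≤ u(p₀⊗Q₀)`. -/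
theorem value_below_u_at_differentiability_points
    {K L : Type*} [Fintype K] [Fintype L] [Nonempty K] [Nonempty L] [DecidableEq K]
    (u : ((K × L) → ℝ) → ℝ) (hu : ContinuousOn u (stdSimplex ℝ (K × L)))
    (W : ((K × L) → ℝ) → ℝ)
    (hWlip : ∃ C : NNReal, LipschitzOnWith C W (stdSimplex ℝ (K × L)))
    (hWconc : ∀ Q : K → L → ℝ, (∀ k, Q k ∈ stdSimplex ℝ L) →
      ConcaveOn ℝ (stdSimplex ℝ K) (fun p => W (tensKQ p Q)))
    (hsub : ∀ Q : K → L → ℝ, (∀ k, Q k ∈ stdSimplex ℝ L) →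
      ∀ φ : (K → ℝ) → ℝ, ContDiff ℝ 1 φ →
      ∀ ζ : K → ℝ, IsLocalMax (fun z => WsharpK W z Q - φ z) ζ →
        -(WsharpK W ζ Q) + fderiv ℝ φ ζ ζ
          + u (tensKQ (fun k => -(fderiv ℝ φ ζ (Pi.single k 1))) Q) ≥ 0)
    (Q₀ : K → L → ℝ) (hQ₀ : ∀ k, Q₀ k ∈ stdSimplex ℝ L)
    (ζ₀ : K → ℝ) (hdiff : DifferentiableAt ℝ (fun ζ => WsharpK W ζ Q₀) ζ₀) :
    (fun k => -(fderiv ℝ (fun ζ => WsharpK W ζ Q₀) ζ₀ (Pi.single k 1))) ∈ stdSimplex ℝ K ∧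
    W (tensKQ (fun k => -(fderiv ℝ (fun ζ => WsharpK W ζ Q₀) ζ₀ (Pi.single k 1))) Q₀)
      ≤ u (tensKQ (fun k => -(fderiv ℝ (fun ζ => WsharpK W ζ Q₀) ζ₀ (Pi.single k 1))) Q₀) := by
  have hpi : ∀ (p : K → ℝ) (k : K), ∑ j, p j * (Pi.single k (1:ℝ) : K → ℝ) j = p k := by
    intro p k
    simp [Pi.single_apply]
  obtain ⟨C, hC⟩ := hWlip
  have hmaps : Set.MapsTo (fun p : K → ℝ => tensKQ p Q₀) (stdSimplex ℝ K)
      (stdSimplex ℝ (K × L)) := fun p hp => aux_tens_mem hp hQ₀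
  have hG : ContinuousOn (fun p => W (tensKQ p Q₀)) (stdSimplex ℝ K) :=
    hC.continuousOn.comp (aux_tens_cont Q₀).continuousOn hmaps
  have hU : ContinuousOn (fun p => u (tensKQ p Q₀)) (stdSimplex ℝ K) :=
    hu.comp (aux_tens_cont Q₀).continuousOn hmaps
  obtain ⟨h1, h2⟩ := aux_att (fun p => W (tensKQ p Q₀)) hG (fun ζ => WsharpK W ζ Q₀)
    (fun z => rfl)
  have hfc := aux_cont _ _ h1 h2
  set f : (K → ℝ) → ℝ := fun ζ => WsharpK W ζ Q₀ with hfdef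
  obtain ⟨p₀, hp₀, hv₀⟩ := h1 ζ₀
  have hgrad : ∀ v, fderiv ℝ f ζ₀ v = - ∑ k, p₀ k * v k :=
    aux_grad f f _ ζ₀ p₀ _ hv₀ (h2 p₀ hp₀) hdiff.hasFDerivAt
      (Filter.Eventually.of_forall fun z => by simp)
  have hp₀eq : (fun k => -(fderiv ℝ f ζ₀ (Pi.single k 1))) = p₀ := by
    funext k
    rw [hgrad, hpi, neg_neg]
  rw [hp₀eq]
  refine ⟨hp₀, ?_⟩
  have key : ∀ ε : ℝ, 0 < ε → ∃ p ∈ stdSimplex ℝ K,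
      (∀ k, |p k - p₀ k| ≤ 2 * ε * Fintype.card K) ∧
      W (tensKQ p Q₀) ≤ u (tensKQ p Q₀) := by
    intro ε hε
    obtain ⟨φ, hφ, ζ, hmax, hg⟩ := aux_touch f hfc ζ₀ _ hdiff.hasFDerivAt ε hε
    obtain ⟨p, hp, hv⟩ := h1 ζ
    have hgr := aux_grad f φ _ ζ p _ hv (h2 p hp)
      (hφ.differentiable one_ne_zero ζ).hasFDerivAt hmax
    have hs := hsub Q₀ hQ₀ φ hφ ζ hmax
    have hpeq : (fun k => -(fderiv ℝ φ ζ (Pi.single k 1))) = p := by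
      funext k
      rw [hgr, hpi, neg_neg]
    rw [hpeq, hgr] at hs
    refine ⟨p, hp, fun k => ?_, ?_⟩
    · have := hg (Pi.single k 1) (by
        rw [pi_norm_le_iff_of_nonneg zero_le_one]
        intro j
        rcases eq_or_ne j k with rfl | h
        · simp
        · simp [h])
      rw [hgr, hgrad, hpi, hpi] at this
      rw [← abs_neg]
      convert this using 2
      ring
    · have hv' : WsharpK W ζ Q₀ = W (tensKQ p Q₀) - ∑ k, p k * ζ k := hv
      linarith
  choose! P hP hPd hPle using key
  let e : ℕ → ℝ := fun n => 1 / ((n : ℝ) + 1)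
  have he : ∀ n, 0 < e n := fun n => by positivity
  have hlim : Tendsto (fun n => P (e n)) atTop (𝓝 p₀) := by
    rw [tendsto_pi_nhds]
    intro k
    rw [tendsto_iff_norm_sub_tendsto_zero]
    refine squeeze_zero (fun n => norm_nonneg _) (fun n => hPd (e n) (he n) k) ?_
    have := ((tendsto_one_div_add_atTop_nhds_zero_nat (𝕜 := ℝ)).const_mul 2).mul_const
      (Fintype.card K : ℝ)
    simpa [e] using this
  have hlim' : Tendsto (fun n => P (e n)) atTop (𝓝[stdSimplex ℝ K] p₀) :=
    tendsto_nhdsWithin_iff.2 ⟨hlim, Filter.Eventually.of_forall fun n => hP _ (he n)⟩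
  exact le_of_tendsto_of_tendsto' ((hG p₀ hp₀).tendsto.comp hlim')
    ((hU p₀ hp₀).tendsto.comp hlim') (fun n => hPle _ (he n))
end

section
/- Let u : Δ(K×L) → ℝ be continuous and let W : Δ(K×L) → ℝ be Lipschitz continuous and K-concave, i.e. p ↦ W(p⊗Q) is concave on Δ(K) for every Q ∈ Δ(L)^K. Assume that for every Q ∈ Δ(L)^K, the map ζ ↦ W_K^♯(ζ,Q) := sup_{p∈Δ(K)} W(p⊗Q) − ⟨p,ζ⟩ is a viscosity sub-solution on ℝ^K of −w(ζ) + ⟨Dw(ζ),ζ⟩ + u_K(−Dw(ζ),Q) ≥ 0 (i.e. for every C¹ function φ such that W_K^♯(·,Q) − φ has a local maximum at ζ, one has −W_K^♯(ζ,Q) + ⟨Dφ(ζ),ζ⟩ + u(−Dφ(ζ) ⊗ Q) ≥ 0). Then for every Q ∈ Δ(L)^K and every extreme point p of the concave function p ↦ W(p⊗Q) on Δ(K), one has W(p⊗Q) ≤ u(p⊗Q). -/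
lemma aux_hull {E : Type*} [NormedAddCommGroup E] [NormedSpace ℝ E] [FiniteDimensional ℝ E]
    (s : Set E) (hs : IsCompact s) : IsCompact (convexHull ℝ s) := by
  classical
  rcases s.eq_empty_or_nonempty with rfl | ⟨x0, hx0⟩
  · simp
  set n := Module.finrank ℝ E + 1 with hn
  have hcomp : IsCompact ((fun wz : (Fin n → ℝ) × (Fin n → E) => ∑ i, wz.1 i • wz.2 i) ''
      (stdSimplex ℝ (Fin n) ×ˢ Set.pi Set.univ (fun _ => s))) := by
    apply ((isCompact_stdSimplex ℝ (Fin n)).prod (isCompact_univ_pi fun _ => hs)).image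
    fun_prop
  convert hcomp using 1
  apply Set.Subset.antisymm
  · intro x hx
    obtain ⟨ι, _, z, w, hz, haff, hw, hw1, hsum⟩ := eq_pos_convex_span_of_mem_convexHull hx
    have hcard : Fintype.card ι ≤ Fintype.card (Fin n) := by
      rw [Fintype.card_fin]
      exact haff.card_le_finrank_succ.trans (Nat.succ_le_succ (Submodule.finrank_le _))
    obtain ⟨e⟩ := Function.Embedding.nonempty_of_card_le hcard
    have hzero : ∀ j, j ∉ Set.range e → Function.extend e w 0 j = 0 := by
      intro j hj
      exact Function.extend_apply' _ _ _ hj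
    refine ⟨(Function.extend e w 0, Function.extend e z (fun _ => x0)), ⟨⟨?_, ?_⟩, ?_⟩, ?_⟩
    · intro j
      by_cases hj : j ∈ Set.range e
      · obtain ⟨i, rfl⟩ := hj
        simpa [e.injective.extend_apply] using (hw i).le
      · exact (hzero j hj).ge
    · rw [← hw1]
      symm
      exact Fintype.sum_of_injective e e.injective _ _ hzero
        (fun i => (e.injective.extend_apply _ _ _).symm)
    · intro j _
      by_cases hj : j ∈ Set.range e
      · obtain ⟨i, rfl⟩ := hj
        simpa [e.injective.extend_apply] using hz (Set.mem_range_self i)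
      · simpa [Function.extend_apply' _ _ _ hj] using hx0
    · rw [← hsum]
      symm
      refine Fintype.sum_of_injective e e.injective _ _ ?_ ?_
      · intro j hj
        simp [hzero j hj]
      · intro i
        simp [e.injective.extend_apply]
  · rintro _ ⟨⟨w, z⟩, ⟨hw, hz⟩, rfl⟩
    exact (convex_convexHull ℝ s).sum_mem (fun i _ => hw.1 i) hw.2
      (fun i _ => subset_convexHull ℝ s (hz i (Set.mem_univ i)))

open Set in
lemma aux_sep {K : Type*} [Fintype K] (f : (K → ℝ) → ℝ)
    (hf : ContinuousOn f (stdSimplex ℝ K)) (hc : ConcaveOn ℝ (stdSimplex ℝ K) f)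
    (p : K → ℝ) (hp : IsExtremePointOf f p) (δ : ℝ) (hδ : 0 < δ) :
    ∃ (a : (K → ℝ) →L[ℝ] ℝ) (η : ℝ), 0 < η ∧ ∀ q ∈ stdSimplex ℝ K, δ ≤ dist q p →
      f q + a q + η ≤ f p + a p := by
  classical
  have hΔ : IsCompact (stdSimplex ℝ K) := isCompact_stdSimplex ℝ K
  set S : Set (K → ℝ) := stdSimplex ℝ K ∩ {q | δ ≤ dist q p} with hS
  have hScomp : IsCompact S :=
    hΔ.inter_right (isClosed_le continuous_const (continuous_id.dist continuous_const))
  set G : Set ((K → ℝ) × ℝ) := (fun q => (q, f q)) '' S with hG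
  have hGcomp : IsCompact G := by
    apply hScomp.image_of_continuousOn
    exact continuousOn_id.prodMk (hf.mono inter_subset_left)
  have hC : IsCompact (convexHull ℝ G) := aux_hull G hGcomp
  set T : Set ((K → ℝ) × ℝ) := {p} ×ˢ Ici (f p) with hT
  have hTc : Convex ℝ T := (convex_singleton p).prod (convex_Ici _)
  have hTcl : IsClosed T := isClosed_singleton.prod isClosed_Ici
  have hdisj : Disjoint (convexHull ℝ G) T := by
    rw [Set.disjoint_left]
    rintro ⟨x, t⟩ hx hxT
    obtain ⟨ι, _, z, w, hz, -, hw, hw1, hsum⟩ := eq_pos_convex_span_of_mem_convexHull hx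
    have hz' : ∀ i, (z i).1 ∈ S ∧ (z i).2 = f (z i).1 := by
      intro i
      obtain ⟨q, hq, hqe⟩ := hz (mem_range_self i)
      rw [← hqe]; exact ⟨hq, rfl⟩
    have hxp : x = p := hxT.1
    have ht : f p ≤ t := hxT.2
    have h1 : ∑ i, w i • (z i).1 = p := by
      rw [← hxp]
      have := congrArg Prod.fst hsum
      simpa [Prod.fst_sum] using this
    have h2 : ∑ i, w i * f (z i).1 = t := by
      have := congrArg Prod.snd hsum
      simp only [Prod.snd_sum, Prod.smul_snd, smul_eq_mul] at this
      rw [← this]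
      exact Finset.sum_congr rfl fun i _ => by rw [(hz' i).2]
    have h3 : ∑ i, w i • f (z i).1 ≤ f (∑ i, w i • (z i).1) :=
      hc.le_map_sum (fun i _ => (hw i).le) hw1 (fun i _ => (hz' i).1.1)
    rw [h1] at h3
    simp only [smul_eq_mul] at h3
    have h4 : ∑ i, w i * f (z i).1 = f p := by linarith
    let e := (Fintype.equivFin ι).symm
    have key := hp.2 (Fintype.card ι) (fun r => w (e r)) (fun r => (z (e r)).1)
      ⟨fun r => (hw _).le, by rw [← hw1]; exact e.sum_comp w⟩ (fun r => hw _)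
      (fun r => (hz' _).1.1)
      (by rw [← h1]; exact e.sum_comp (fun i => w i • (z i).1))
      (by rw [← h4]; exact e.sum_comp (fun i => w i * f (z i).1))
    have hne : Nonempty ι := by
      by_contra h
      rw [not_nonempty_iff] at h
      simp at hw1
    obtain ⟨i⟩ := hne
    have h5 := key (e.symm i)
    simp only [Equiv.apply_symm_apply] at h5
    have h6 := (hz' i).1.2
    simp only [h5, mem_ofPred_eq, dist_self] at h6
    linarith
  obtain ⟨g, s, t, hgs, hst, hgt⟩ :=
    geometric_hahn_banach_compact_closed (convex_convexHull ℝ G) hC hTc hTcl hdisj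
  set b : ℝ := g (0, 1) with hb
  have hdec : ∀ q r, g (q, r) = g (q, 0) + r * b := by
    intro q r
    have : ((q, r) : (K → ℝ) × ℝ) = (q, 0) + r • ((0 : K → ℝ), (1 : ℝ)) := by
      ext <;> simp
    rw [this, map_add, map_smul, smul_eq_mul]
  have hb0 : 0 ≤ b := by
    by_contra hneg
    push Not at hneg
    have h0 : g (p, 0) + f p * b > t := by
      rw [← hdec]; exact hgt _ ⟨rfl, le_refl (f p)⟩
    have := hgt (p, f p + (g (p, 0) + f p * b - t) / (-b))
      ⟨rfl, by
        have : 0 ≤ (g (p, 0) + f p * b - t) / (-b) := div_nonneg (by linarith) (by linarith)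
        simpa using this⟩
    rw [hdec] at this
    have h7 : (g (p, 0) + f p * b - t) / (-b) * b = -(g (p, 0) + f p * b - t) := by
      have hbne : b ≠ 0 := hneg.ne
      rw [div_neg, neg_mul, div_mul_cancel₀ _ hbne]
    nlinarith
  obtain ⟨M, hM⟩ := hΔ.exists_bound_of_continuousOn hf
  have hMp := hM p hp.1
  have hM0 : 0 ≤ M := (norm_nonneg _).trans hMp
  rw [Real.norm_eq_abs, abs_le] at hMp
  set c : ℝ := (t - s) / (2 * (2 * M + 1)) with hcdef
  have hc0 : 0 < c := by apply div_pos <;> linarith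
  have hcM : c * (2 * (2 * M + 1)) = t - s := by
    rw [hcdef]; field_simp
  have hbc : 0 < b + c := by linarith
  refine ⟨(b + c)⁻¹ • (g.comp (ContinuousLinearMap.inl ℝ (K → ℝ) ℝ)),
    (b + c)⁻¹ * ((t - s) / 2), by have : 0 < t - s := by linarith
                                  positivity, ?_⟩
  intro q hq hqd
  have hMq := hM q hq
  rw [Real.norm_eq_abs, abs_le] at hMq
  have hq1 := hgs (q, f q) (subset_convexHull ℝ G ⟨q, ⟨hq, hqd⟩, rfl⟩)
  have hp1 := hgt (p, f p) ⟨rfl, le_refl (f p)⟩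
  rw [hdec] at hq1 hp1
  simp only [smul_apply, ContinuousLinearMap.comp_apply,
    ContinuousLinearMap.inl_apply, smul_eq_mul]
  have hfin : (b + c) * f q + g (q, 0) + (t - s) / 2 ≤ (b + c) * f p + g (p, 0) := by
    nlinarith
  have h8 := mul_le_mul_of_nonneg_left hfin (inv_pos.2 hbc).le
  have e1 : (b + c)⁻¹ * ((b + c) * f q + g (q, 0) + (t - s) / 2)
    = f q + (b + c)⁻¹ * g (q, 0) + (b + c)⁻¹ * ((t - s) / 2) := by field_simp
  have e2 : (b + c)⁻¹ * ((b + c) * f p + g (p, 0))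
    = f p + (b + c)⁻¹ * g (p, 0) := by field_simp
  linarith

lemma aux_exposed {K : Type*} [Fintype K] (f : (K → ℝ) → ℝ)
    (hf : ContinuousOn f (stdSimplex ℝ K)) (hc : ConcaveOn ℝ (stdSimplex ℝ K) f)
    (p : K → ℝ) (hp : IsExtremePointOf f p) (δ : ℝ) (hδ : 0 < δ) :
    ∃ q ∈ stdSimplex ℝ K, dist q p < δ ∧ ∃ (ε : ℝ) (ζ : K → ℝ), 0 < ε ∧
      ∀ q' ∈ stdSimplex ℝ K,
        f q' - ∑ k, q' k * ζ k + ε * ∑ k, (q' k - q k) ^ 2 ≤ f q - ∑ k, q k * ζ k := by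
  classical
  obtain ⟨a, η, hη, ha⟩ := aux_sep f hf hc p hp δ hδ
  have hΔ : IsCompact (stdSimplex ℝ K) := isCompact_stdSimplex ℝ K
  have hsq : Continuous (fun q : K → ℝ => ∑ k, (q k - p k) ^ 2) := by fun_prop
  obtain ⟨M, hM⟩ := hΔ.exists_bound_of_continuousOn hsq.continuousOn
  have hM0 : 0 ≤ M := (norm_nonneg _).trans (hM p hp.1)
  set ε : ℝ := η / (2 * (M + 1)) with hεd
  have hε : 0 < ε := by positivity
  have hεM : ε * (2 * (M + 1)) = η := by rw [hεd]; field_simp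
  obtain ⟨q, hq, hmax⟩ := hΔ.exists_isMaxOn ⟨p, hp.1⟩
    ((hf.add a.continuous.continuousOn).add (hsq.continuousOn.const_smul ε))
  have hmax' : ∀ q' ∈ stdSimplex ℝ K, f q' + a q' + ε * ∑ k, (q' k - p k) ^ 2
      ≤ f q + a q + ε * ∑ k, (q k - p k) ^ 2 := fun q' hq' => hmax hq'
  refine ⟨q, hq, ?_, ε, fun k => -(a (Pi.single k 1)) - 2 * ε * (q k - p k), hε, ?_⟩
  · by_contra hcon
    push Not at hcon
    have h1 := ha q hq hcon
    have h2 := hmax' p hp.1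
    have h3 := (Real.le_norm_self _).trans (hM q hq)
    simp only [sub_self, ne_eq, OfNat.ofNat_ne_zero, not_false_eq_true, zero_pow,
      Finset.sum_const_zero, mul_zero] at h2
    nlinarith [mul_le_mul_of_nonneg_left h3 hε.le]
  · intro q' hq'
    have h1 := hmax' q' hq'
    have hlin : ∀ x : K → ℝ, a x = ∑ k, x k * a (Pi.single k 1) := by
      intro x
      conv_lhs => rw [pi_eq_sum_univ' x]
      rw [map_sum]
      refine Finset.sum_congr rfl fun k _ => ?_
      rw [map_smul, smul_eq_mul]
    rw [hlin q, hlin q'] at h1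
    have e1 : (f q' - ∑ k, q' k * (-(a (Pi.single k 1)) - 2 * ε * (q k - p k))
          + ε * ∑ k, (q' k - q k) ^ 2)
        - (f q - ∑ k, q k * (-(a (Pi.single k 1)) - 2 * ε * (q k - p k)))
        = (f q' + ∑ k, q' k * a (Pi.single k 1) + ε * ∑ k, (q' k - p k) ^ 2)
          - (f q + ∑ k, q k * a (Pi.single k 1) + ε * ∑ k, (q k - p k) ^ 2) := by
      rw [← sub_eq_zero]
      have : ∑ k, (- (q' k * (-(a (Pi.single k 1)) - 2 * ε * (q k - p k)))
          + ε * (q' k - q k) ^ 2 + q k * (-(a (Pi.single k 1)) - 2 * ε * (q k - p k))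
          - q' k * a (Pi.single k 1) - ε * (q' k - p k) ^ 2 + q k * a (Pi.single k 1)
          + ε * (q k - p k) ^ 2) = 0 := by
        apply Finset.sum_eq_zero
        intro k _
        ring
      simp only [Finset.sum_add_distrib, Finset.sum_sub_distrib, Finset.sum_neg_distrib,
        ← Finset.mul_sum] at this
      linarith
    linarith

lemma aux_mem {K L : Type*} [Fintype K] [Fintype L] (Q : K → L → ℝ)
    (hQ : ∀ k, Q k ∈ stdSimplex ℝ L) (p : K → ℝ) (hp : p ∈ stdSimplex ℝ K) :
    tensKQ p Q ∈ stdSimplex ℝ (K × L) := by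
  refine ⟨fun kl => mul_nonneg (hp.1 _) ((hQ _).1 _), ?_⟩
  rw [Fintype.sum_prod_type]
  simp only [tensKQ, ← Finset.mul_sum, (hQ _).2, mul_one]
  exact hp.2

/-- If `W` is Lipschitz, `K`-concave, and for every `Q` the map `ζ ↦ W_K^♯(ζ,Q)` is a
viscosity sub-solution of `−w(ζ) + ⟨Dw(ζ),ζ⟩ + u_K(−Dw(ζ),Q) ≥ 0` on `ℝ^K`, then
`W(p⊗Q) ≤ u(p⊗Q)` for every `Q ∈ Δ(L)^K` and every extreme point `p` of the concave
function `p ↦ W(p⊗Q)` on `Δ(K)`. -/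
theorem value_below_u_at_extreme_points
    {K L : Type*} [Fintype K] [Fintype L] [Nonempty K] [Nonempty L] [DecidableEq K]
    (u : ((K × L) → ℝ) → ℝ) (hu : ContinuousOn u (stdSimplex ℝ (K × L)))
    (W : ((K × L) → ℝ) → ℝ)
    (hWlip : ∃ C : NNReal, LipschitzOnWith C W (stdSimplex ℝ (K × L)))
    (hWconc : ∀ Q : K → L → ℝ, (∀ k, Q k ∈ stdSimplex ℝ L) →
      ConcaveOn ℝ (stdSimplex ℝ K) (fun p => W (tensKQ p Q)))
    (hsub : ∀ Q : K → L → ℝ, (∀ k, Q k ∈ stdSimplex ℝ L) →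
      ∀ φ : (K → ℝ) → ℝ, ContDiff ℝ 1 φ →
      ∀ ζ : K → ℝ, IsLocalMax (fun z => WsharpK W z Q - φ z) ζ →
        -(WsharpK W ζ Q) + fderiv ℝ φ ζ ζ
          + u (tensKQ (fun k => -(fderiv ℝ φ ζ (Pi.single k 1))) Q) ≥ 0) :
    ∀ Q : K → L → ℝ, (∀ k, Q k ∈ stdSimplex ℝ L) →
      ∀ p : K → ℝ, IsExtremePointOf (fun p' => W (tensKQ p' Q)) p →
        W (tensKQ p Q) ≤ u (tensKQ p Q) := by
  intro Q hQ p hp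
  obtain ⟨C, hC⟩ := hWlip
  have htc : Continuous (fun p : K → ℝ => tensKQ p Q) := by
    unfold tensKQ; fun_prop
  have hmaps : Set.MapsTo (fun p : K → ℝ => tensKQ p Q) (stdSimplex ℝ K)
      (stdSimplex ℝ (K × L)) := fun q hq => aux_mem Q hQ q hq
  have hf : ContinuousOn (fun p : K → ℝ => W (tensKQ p Q)) (stdSimplex ℝ K) :=
    hC.continuousOn.comp htc.continuousOn hmaps
  have hv : ContinuousOn (fun p : K → ℝ => u (tensKQ p Q)) (stdSimplex ℝ K) :=
    hu.comp htc.continuousOn hmaps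
  have main : ∀ δ > 0, ∃ q ∈ stdSimplex ℝ K, dist q p < δ ∧
      W (tensKQ q Q) ≤ u (tensKQ q Q) := by
    intro δ hδ
    obtain ⟨q, hq, hqd, ε, ζ, hε, hmax⟩ := aux_exposed _ hf (hWconc Q hQ) p hp δ hδ
    refine ⟨q, hq, hqd, ?_⟩
    have hw : WsharpK W ζ Q = W (tensKQ q Q) - ∑ k, q k * ζ k := by
      apply IsGreatest.csSup_eq
      refine ⟨⟨q, hq, rfl⟩, ?_⟩
      rintro _ ⟨q', hq', rfl⟩
      have h1 := hmax q' hq'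
      have h2 : 0 ≤ ε * ∑ k, (q' k - q k) ^ 2 := by positivity
      simp only at h1 ⊢
      linarith
    let A : (K → ℝ) →L[ℝ] ℝ := -∑ k, q k • ContinuousLinearMap.proj (R := ℝ) (φ := fun _ => ℝ) k
    have hA : ∀ v, A v = -∑ k, q k * v k := by
      intro v; simp [A]
    let φ : (K → ℝ) → ℝ := fun z => A z + 1 / (4 * ε) * ∑ k, (z k - ζ k) ^ 2
    have hφc : ContDiff ℝ 1 φ := by
      apply ContDiff.add A.contDiff
      fun_prop
    have hφd : fderiv ℝ φ ζ = A := by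
      have h1 : ∀ k, HasFDerivAt (fun z : K → ℝ => (z k - ζ k) ^ 2) (0 : (K → ℝ) →L[ℝ] ℝ) ζ := by
        intro k
        have h := ((hasFDerivAt_apply (𝕜 := ℝ) k ζ).sub_const (ζ k)).pow 2
        refine h.congr_fderiv ?_
        simp
      have h2 : HasFDerivAt φ (A + (1 / (4 * ε)) • ∑ k : K, (0 : (K → ℝ) →L[ℝ] ℝ)) ζ :=
        A.hasFDerivAt.add ((HasFDerivAt.fun_sum fun k _ => h1 k).const_mul _)
      rw [h2.fderiv]
      simp
    have hloc : IsLocalMax (fun z => WsharpK W z Q - φ z) ζ := by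
      refine Filter.Eventually.of_forall fun z => ?_
      have hz : WsharpK W z Q ≤ W (tensKQ q Q) - ∑ k, q k * ζ k - ∑ k, q k * (z k - ζ k)
          + 1 / (4 * ε) * ∑ k, (z k - ζ k) ^ 2 := by
        apply csSup_le (Set.Nonempty.image _ ⟨q, hq⟩)
        rintro _ ⟨q', hq', rfl⟩
        have h1 := hmax q' hq'
        simp only at h1 ⊢
        have h3 : 0 ≤ ∑ k, (ε * (q' k - q k) ^ 2 + (q' k * z k - q' k * ζ k
            - q k * (z k - ζ k)) + 1 / (4 * ε) * (z k - ζ k) ^ 2) := by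
          apply Finset.sum_nonneg
          intro k _
          have : ε * (q' k - q k) ^ 2 + (q' k * z k - q' k * ζ k
            - q k * (z k - ζ k)) + 1 / (4 * ε) * (z k - ζ k) ^ 2
            = ε * ((q' k - q k) + (z k - ζ k) / (2 * ε)) ^ 2 := by
            field_simp
            ring
          rw [this]
          positivity
        simp only [Finset.sum_add_distrib, Finset.sum_sub_distrib,
          ← Finset.mul_sum] at h3
        linarith
      have e : ∑ k, q k * (z k - ζ k) = ∑ k, q k * z k - ∑ k, q k * ζ k := by
        simp only [mul_sub, Finset.sum_sub_distrib]
      simp only [φ, hA, hw, sub_self, ne_eq, OfNat.ofNat_ne_zero, not_false_eq_true, zero_pow,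
        Finset.sum_const_zero, mul_zero]
      linarith
    have hfinal := hsub Q hQ φ hφc ζ hloc
    rw [hφd, hw, hA] at hfinal
    have hq2 : (fun k => -(A (Pi.single k 1))) = q := by
      funext k
      rw [hA]
      simp [Pi.single_apply]
    rw [hq2] at hfinal
    linarith
  by_contra hcon
  push Not at hcon
  have hd : ContinuousWithinAt (fun p : K → ℝ => W (tensKQ p Q) - u (tensKQ p Q))
    (stdSimplex ℝ K) p := (hf.sub hv) p hp.1
  have hev := hd.eventually (lt_mem_nhds (sub_pos.2 hcon))
  rw [eventually_nhdsWithin_iff, Metric.eventually_nhds_iff] at hev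
  obtain ⟨δ, hδ, hball⟩ := hev
  obtain ⟨q, hq, hqd, hle⟩ := main δ hδ
  have := hball hqd hq
  linarith
end

section
/- (Uniqueness in the stationary characterization.) Let u : Δ(K×L) → ℝ be Lipschitz continuous. Let W¹, W² : Δ(K×L) → ℝ be Lipschitz continuous functions that are K-concave (p ↦ Wⁱ(p⊗Q) concave on Δ(K) for every Q ∈ Δ(L)^K) and L-convex (q ↦ Wⁱ(q⊗P) convex on Δ(L) for every P ∈ Δ(K)^L), and assume that for each i ∈ {1,2}: (1) for every Q ∈ Δ(L)^K, ζ ↦ Wⁱ_K^♯(ζ,Q) := sup_{p∈Δ(K)} Wⁱ(p⊗Q) − ⟨p,ζ⟩ is a viscosity sub-solution on ℝ^K of −w(ζ) + ⟨Dw(ζ),ζ⟩ + u_K(−Dw(ζ),Q) ≥ 0; (2) for every P ∈ Δ(K)^L, η ↦ Wⁱ_L^♭(P,η) := inf_{q∈Δ(L)} Wⁱ(q⊗P) + ⟨q,η⟩ is a viscosity super-solution on ℝ^L of −w(η) + ⟨Dw(η),η⟩ + u_L(P,Dw(η)) ≤ 0. Then W¹ = W² on Δ(K×L). -/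
/-- `q ⊗ P ∈ Δ(K×L)`: `(q ⊗ P)(k,ℓ) = q(ℓ) P(ℓ)(k)`. -/
def tensLP {K L : Type*} (q : L → ℝ) (P : L → K → ℝ) : (K × L) → ℝ :=
  fun kl => q kl.2 * P kl.2 kl.1

/-- `W_L^♭(P, η) = inf_{q ∈ Δ(L)} W(q⊗P) + ⟨q, η⟩`. -/
noncomputable def WflatL {K L : Type*} [Fintype L]
    (W : ((K × L) → ℝ) → ℝ) (P : L → K → ℝ) (η : L → ℝ) : ℝ :=
  sInf ((fun q => W (tensLP q P) + ∑ l, q l * η l) '' stdSimplex ℝ L)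

/-- `W` is a stationary dual solution for the game with non-revealing value `u`:
it is Lipschitz on `Δ(K×L)`, `K`-concave and `L`-convex, for every `Q ∈ Δ(L)^K` the
convex function `ζ ↦ W_K^♯(ζ,Q)` is a viscosity sub-solution on `ℝ^K` of
`−w(ζ) + ⟨Dw(ζ),ζ⟩ + u_K(−Dw(ζ),Q) ≥ 0`, and for every `P ∈ Δ(K)^L` the concave
function `η ↦ W_L^♭(P,η)` is a viscosity super-solution on `ℝ^L` of
`−w(η) + ⟨Dw(η),η⟩ + u_L(P,Dw(η)) ≤ 0`. -/
def IsStationaryDualSolution {K L : Type*} [Fintype K] [Fintype L]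
    [DecidableEq K] [DecidableEq L]
    (u : ((K × L) → ℝ) → ℝ) (W : ((K × L) → ℝ) → ℝ) : Prop :=
  (∃ C : NNReal, LipschitzOnWith C W (stdSimplex ℝ (K × L))) ∧
  (∀ Q : K → L → ℝ, (∀ k, Q k ∈ stdSimplex ℝ L) →
    ConcaveOn ℝ (stdSimplex ℝ K) (fun p => W (tensKQ p Q))) ∧
  (∀ P : L → K → ℝ, (∀ l, P l ∈ stdSimplex ℝ K) →
    ConvexOn ℝ (stdSimplex ℝ L) (fun q => W (tensLP q P))) ∧
  (∀ Q : K → L → ℝ, (∀ k, Q k ∈ stdSimplex ℝ L) →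
    ∀ φ : (K → ℝ) → ℝ, ContDiff ℝ 1 φ →
    ∀ ζ : K → ℝ, IsLocalMax (fun z => WsharpK W z Q - φ z) ζ →
      -(WsharpK W ζ Q) + fderiv ℝ φ ζ ζ
        + u (tensKQ (fun k => -(fderiv ℝ φ ζ (Pi.single k 1))) Q) ≥ 0) ∧
  (∀ P : L → K → ℝ, (∀ l, P l ∈ stdSimplex ℝ K) →
    ∀ φ : (L → ℝ) → ℝ, ContDiff ℝ 1 φ →
    ∀ η : L → ℝ, IsLocalMin (fun z => WflatL W P z - φ z) η →
      -(WflatL W P η) + fderiv ℝ φ η η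
        + u (tensLP (fun l => fderiv ℝ φ η (Pi.single l 1)) P) ≤ 0)

/-- Supergradient of a Lipschitz concave function on the simplex (boundary points included). -/
lemma exists_supergrad {ι : Type*} [Fintype ι] [DecidableEq ι]
    (b : (ι → ℝ) → ℝ) (hb : ConcaveOn ℝ (stdSimplex ℝ ι) b) (C : ℝ) (hC : 0 ≤ C)
    (p : ι → ℝ) (hp : p ∈ stdSimplex ℝ ι)
    (hL : ∀ x ∈ stdSimplex ℝ ι, b x ≤ b p + C * ‖x - p‖) :
    ∃ m : ι → ℝ, ∀ x ∈ stdSimplex ℝ ι, b x ≤ b p + ∑ k, m k * (x k - p k) := by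
  have hnc : ConvexOn ℝ Set.univ (fun x : ι → ℝ => b p + C * ‖x - p‖) := by
    refine ⟨convex_univ, ?_⟩
    intro x _ y _ s t hs ht hst
    have h1 : s • x + t • y - p = s • (x - p) + t • (y - p) := by
      have : p = (s + t) • p := by rw [hst, one_smul]
      nth_rewrite 1 [this]
      module
    have h2 : ‖s • x + t • y - p‖ ≤ s * ‖x - p‖ + t * ‖y - p‖ := by
      rw [h1]
      refine (norm_add_le _ _).trans ?_
      rw [norm_smul, norm_smul, Real.norm_of_nonneg hs, Real.norm_of_nonneg ht]
    have h3 := mul_le_mul_of_nonneg_left h2 hC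
    simp only [smul_eq_mul]
    have h4 : s * b p + t * b p = b p := by rw [← add_mul, hst, one_mul]
    nlinarith
  have hBc : Convex ℝ {z : (ι → ℝ) × ℝ | b p + C * ‖z.1 - p‖ < z.2} := by
    have := hnc.convex_strict_epigraph
    simpa using this
  have hBo : IsOpen {z : (ι → ℝ) × ℝ | b p + C * ‖z.1 - p‖ < z.2} :=
    isOpen_lt (by fun_prop) (by fun_prop)
  have hAc := hb.convex_hypograph
  have hdisj : Disjoint {z : (ι → ℝ) × ℝ | b p + C * ‖z.1 - p‖ < z.2}
      {z : (ι → ℝ) × ℝ | z.1 ∈ stdSimplex ℝ ι ∧ z.2 ≤ b z.1} := by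
    rw [Set.disjoint_left]
    rintro ⟨x, t⟩ h1 ⟨h2, h3⟩
    have := hL x h2
    simp only [Set.mem_ofPred_eq] at h1 h3
    linarith
  obtain ⟨f, α, hf1, hf2⟩ := geometric_hahn_banach_open hBc hBo hAc hdisj
  have hdec : ∀ (x : ι → ℝ) (t : ℝ), f (x, t) = f (x, 0) + t * f (0, 1) := by
    intro x t
    have : ((x, t) : (ι → ℝ) × ℝ) = (x, 0) + t • (0, 1) := by simp
    rw [this, map_add, map_smul, smul_eq_mul]
  have hlin : ∀ x : ι → ℝ, f (x, 0) = ∑ k, x k * f (Pi.single k 1, 0) := by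
    intro x
    have h := (f.comp (ContinuousLinearMap.inl ℝ (ι → ℝ) ℝ)).toLinearMap.pi_apply_eq_sum_univ x
    simp only [ContinuousLinearMap.coe_coe, ContinuousLinearMap.comp_apply,
      ContinuousLinearMap.inl_apply, smul_eq_mul] at h
    rw [h]
    refine Finset.sum_congr rfl fun k _ => ?_
    congr 3
    ext j
    simp [Pi.single_apply, eq_comm]
  set s := f (0, 1) with hs
  have hpt : α ≤ f (p, b p) := hf2 (p, b p) ⟨hp, le_rfl⟩
  have hup : ∀ t, b p < t → f (p, t) < α := by
    intro t ht
    apply hf1 (p, t)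
    simpa using ht
  have hsneg : s < 0 := by
    have h1 := hup (b p + 1) (by linarith)
    rw [hdec] at h1 hpt
    linarith
  have hle : f (p, b p) ≤ α := by
    by_contra hcon
    push Not at hcon
    have hd : 0 < (f (p, b p) - α) / (-s) := div_pos (by linarith) (by linarith)
    have h1 := hup (b p + (f (p, b p) - α) / (-s)) (by linarith)
    rw [hdec] at h1
    have h2 : (f (p, b p) - α) / (-s) * s = -(f (p, b p) - α) := by
      have := hsneg.ne
      field_simp
    have h3 := hdec p (b p)
    rw [add_mul, h2] at h1
    linarith
  refine ⟨fun k => f (Pi.single k 1, 0) / (-s), fun x hx => ?_⟩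
  have h1 : α ≤ f (x, b x) := hf2 (x, b x) ⟨hx, le_rfl⟩
  have h2 : ∑ k, f (Pi.single k 1, 0) / (-s) * (x k - p k)
      = (f (x, 0) - f (p, 0)) / (-s) := by
    rw [hlin x, hlin p, ← Finset.sum_sub_distrib, Finset.sum_div]
    refine Finset.sum_congr rfl fun k _ => ?_
    ring
  rw [h2]
  have h3 : b x - b p ≤ (f (x, 0) - f (p, 0)) / (-s) := by
    rw [le_div_iff₀ (by linarith)]
    rw [hdec] at h1 hle
    linarith
  linarith

/-- At a strongly exposed point, the conjugate is touched from above by an explicit smooth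
function. -/
lemma exists_test {ι : Type*} [Fintype ι] [DecidableEq ι]
    (a b : (ι → ℝ) → ℝ) (hb : ConcaveOn ℝ (stdSimplex ℝ ι) b) (C : ℝ) (hC : 0 ≤ C)
    (p : ι → ℝ) (hp : p ∈ stdSimplex ℝ ι)
    (hL : ∀ x ∈ stdSimplex ℝ ι, b x ≤ b p + C * ‖x - p‖)
    (c : ℝ) (hc : 0 < c) (m : ι → ℝ)
    (hab : ∀ x ∈ stdSimplex ℝ ι, a x - b x ≤ a p - b p + ∑ k, m k * (x k - p k)
      - c * ∑ k, (x k - p k) ^ 2) :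
    ∃ (ζ : ι → ℝ) (φ : (ι → ℝ) → ℝ), ContDiff ℝ 1 φ ∧
      (∀ v, fderiv ℝ φ ζ v = -∑ k, p k * v k) ∧
      sSup ((fun x => a x - ∑ k, x k * ζ k) '' stdSimplex ℝ ι) = a p - ∑ k, p k * ζ k ∧
      ∀ z, sSup ((fun x => a x - ∑ k, x k * z k) '' stdSimplex ℝ ι) - φ z ≤
        sSup ((fun x => a x - ∑ k, x k * ζ k) '' stdSimplex ℝ ι) - φ ζ := by
  obtain ⟨n, hn⟩ := exists_supergrad b hb C hC p hp hL
  set ζ : ι → ℝ := fun k => m k + n k with hζ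
  have hne : (stdSimplex ℝ ι).Nonempty := ⟨p, hp⟩
  have hmain : ∀ x ∈ stdSimplex ℝ ι, ∀ z : ι → ℝ,
      a x - ∑ k, x k * z k ≤ a p - ∑ k, p k * z k
        + (4 * c)⁻¹ * ∑ k, (z k - ζ k) ^ 2 := by
    intro x hx z
    have h1 := hab x hx
    have h2 := hn x hx
    have h3 : ∑ k, p k * z k - ∑ k, x k * z k + ∑ k, m k * (x k - p k)
        + ∑ k, n k * (x k - p k) - c * ∑ k, (x k - p k) ^ 2
        ≤ (4 * c)⁻¹ * ∑ k, (z k - ζ k) ^ 2 := by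
      rw [Finset.mul_sum, Finset.mul_sum, ← Finset.sum_sub_distrib, ← Finset.sum_add_distrib,
        ← Finset.sum_add_distrib, ← Finset.sum_sub_distrib]
      refine Finset.sum_le_sum fun k _ => ?_
      have : (4 * c)⁻¹ * (z k - ζ k) ^ 2 - (p k * z k - x k * z k + m k * (x k - p k)
        + n k * (x k - p k) - c * (x k - p k) ^ 2)
        = (4 * c)⁻¹ * (z k - ζ k + 2 * c * (x k - p k)) ^ 2 := by
        simp only [hζ]
        field_simp
        ring
      have h5 : 0 ≤ (4 * c)⁻¹ * (z k - ζ k + 2 * c * (x k - p k)) ^ 2 := by positivity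
      linarith
    linarith
  have hval : sSup ((fun x => a x - ∑ k, x k * ζ k) '' stdSimplex ℝ ι)
      = a p - ∑ k, p k * ζ k := by
    apply IsGreatest.csSup_eq
    refine ⟨⟨p, hp, rfl⟩, ?_⟩
    rintro _ ⟨x, hx, rfl⟩
    simpa using hmain x hx ζ
  refine ⟨ζ, fun z => -(∑ k, p k * z k) + (4 * c)⁻¹ * ∑ k, (z k - ζ k) ^ 2, ?_, ?_, hval, ?_⟩
  · fun_prop
  · intro v
    have hd : HasFDerivAt (fun z : ι → ℝ => -(∑ k, p k * z k) + (4 * c)⁻¹ * ∑ k, (z k - ζ k) ^ 2)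
        (-(∑ k, p k • (ContinuousLinearMap.proj k : (ι → ℝ) →L[ℝ] ℝ))
          + (4 * c)⁻¹ • ∑ k, ((2 : ℕ) * (ζ k - ζ k) ^ (2 - 1)) •
            (ContinuousLinearMap.proj k : (ι → ℝ) →L[ℝ] ℝ)) ζ := by
      refine HasFDerivAt.add (HasFDerivAt.neg (HasFDerivAt.fun_sum fun k _ => ?_))
        (HasFDerivAt.const_mul (HasFDerivAt.fun_sum fun k _ => ?_) _)
      · exact (hasFDerivAt_apply (𝕜 := ℝ) k ζ).const_mul (p k)
      · have := ((hasFDerivAt_apply (𝕜 := ℝ) k ζ).sub_const (ζ k)).pow 2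
        simpa using this
    rw [hd.fderiv]
    simp
  · intro z
    have hz : sSup ((fun x => a x - ∑ k, x k * z k) '' stdSimplex ℝ ι)
        ≤ a p - ∑ k, p k * z k + (4 * c)⁻¹ * ∑ k, (z k - ζ k) ^ 2 := by
      apply csSup_le (hne.image _)
      rintro _ ⟨x, hx, rfl⟩
      exact hmain x hx z
    rw [hval]
    have h0 : ∑ k, (ζ k - ζ k) ^ 2 = 0 := by simp
    beta_reduce
    rw [h0]
    linarith

lemma exists_disint {K L : Type*} [Fintype K] [Fintype L] [Nonempty L] [DecidableEq L]
    (π : K × L → ℝ) (hπ : π ∈ stdSimplex ℝ (K × L)) :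
    ∃ (p : K → ℝ) (Q : K → L → ℝ), p ∈ stdSimplex ℝ K ∧ (∀ k, Q k ∈ stdSimplex ℝ L) ∧
      ∀ k l, p k * Q k l = π (k, l) := by
  classical
  obtain ⟨l0⟩ := ‹Nonempty L›
  refine ⟨fun k => ∑ l, π (k, l), fun k => if ∑ l, π (k, l) = 0 then Pi.single l0 1
    else fun l => π (k, l) / ∑ l, π (k, l), ⟨fun k => Finset.sum_nonneg fun l _ => hπ.1 _, ?_⟩,
    ?_, ?_⟩
  · rw [← Fintype.sum_prod_type']
    exact hπ.2
  · intro k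
    dsimp only
    split_ifs with h
    · exact single_mem_stdSimplex ℝ l0
    · refine ⟨fun l => div_nonneg (hπ.1 _) (Finset.sum_nonneg fun l _ => hπ.1 _), ?_⟩
      rw [← Finset.sum_div, div_self h]
  · intro k l
    dsimp only
    split_ifs with h
    · rw [h, zero_mul]
      rw [Finset.sum_eq_zero_iff_of_nonneg (fun l _ => hπ.1 _)] at h
      exact (h l (Finset.mem_univ _)).symm
    · field_simp

lemma tens_mem {K L : Type*} [Fintype K] [Fintype L]
    (p : K → ℝ) (Q : K → L → ℝ) (hp : p ∈ stdSimplex ℝ K) (hQ : ∀ k, Q k ∈ stdSimplex ℝ L) :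
    tensKQ p Q ∈ stdSimplex ℝ (K × L) := by
  refine ⟨fun kl => mul_nonneg (hp.1 _) ((hQ _).1 _), ?_⟩
  rw [Fintype.sum_prod_type]
  simp only [tensKQ, ← Finset.mul_sum, (hQ _).2, mul_one]
  exact hp.2

lemma tensLP_eq {K L : Type*} (q : L → ℝ) (P : L → K → ℝ) :
    tensLP q P = fun kl => tensKQ q P kl.swap := rfl

lemma tensLP_mem {K L : Type*} [Fintype K] [Fintype L]
    (q : L → ℝ) (P : L → K → ℝ) (hq : q ∈ stdSimplex ℝ L) (hP : ∀ l, P l ∈ stdSimplex ℝ K) :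
    tensLP q P ∈ stdSimplex ℝ (K × L) := by
  have h := tens_mem q P hq hP
  refine ⟨fun kl => h.1 kl.swap, ?_⟩
  rw [← h.2]
  exact (Equiv.prodComm K L).sum_comp (tensKQ q P)

lemma entry_le_one {L : Type*} [Fintype L] (x : L → ℝ) (hx : x ∈ stdSimplex ℝ L) (l : L) :
    |x l| ≤ 1 := by
  rw [abs_of_nonneg (hx.1 l), ← hx.2]
  exact Finset.single_le_sum (fun i _ => hx.1 i) (Finset.mem_univ l)

lemma tens_norm {K L : Type*} [Fintype K] [Fintype L]
    (p p' : K → ℝ) (Q : K → L → ℝ) (hQ : ∀ k, Q k ∈ stdSimplex ℝ L) :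
    ‖tensKQ p Q - tensKQ p' Q‖ ≤ ‖p - p'‖ := by
  rw [pi_norm_le_iff_of_nonneg (norm_nonneg _)]
  rintro ⟨k, l⟩
  have h1 : (tensKQ p Q - tensKQ p' Q) (k, l) = (p - p') k * Q k l := by
    simp [tensKQ]; ring
  rw [h1, norm_mul]
  have h2 := entry_le_one _ (hQ k) l
  have h3 := norm_le_pi_norm (p - p') k
  rw [Real.norm_eq_abs (Q k l)]
  nlinarith [norm_nonneg ((p - p') k), abs_nonneg (Q k l)]

lemma tensLP_norm {K L : Type*} [Fintype K] [Fintype L]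
    (q q' : L → ℝ) (P : L → K → ℝ) (hP : ∀ l, P l ∈ stdSimplex ℝ K) :
    ‖tensLP q P - tensLP q' P‖ ≤ ‖q - q'‖ := by
  have h := tens_norm q q' P hP
  rw [pi_norm_le_iff_of_nonneg (norm_nonneg _)] at h ⊢
  exact fun kl => h kl.swap

/-- Quadratic expansion of the strictly convex penalty along `p ↦ p ⊗ Q`. -/
lemma quad_bound {K L : Type*} [Fintype K] [Fintype L] [Nonempty L]
    (p x : K → ℝ) (Q : K → L → ℝ) (hQ : ∀ k, Q k ∈ stdSimplex ℝ L) :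
    ∑ kl, tensKQ p Q kl ^ 2 + ∑ k, (2 * p k * ∑ l, Q k l ^ 2) * (x k - p k)
      + (Fintype.card L : ℝ)⁻¹ * ∑ k, (x k - p k) ^ 2 ≤ ∑ kl, tensKQ x Q kl ^ 2 := by
  rw [Fintype.sum_prod_type, Fintype.sum_prod_type, Finset.mul_sum, ← Finset.sum_add_distrib,
    ← Finset.sum_add_distrib]
  refine Finset.sum_le_sum fun k _ => ?_
  simp only [tensKQ, mul_pow, ← Finset.mul_sum]
  have hcard : (0 : ℝ) < Fintype.card L := by exact_mod_cast Fintype.card_pos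
  have h1 : (Fintype.card L : ℝ)⁻¹ ≤ ∑ l, Q k l ^ 2 := by
    have := sq_sum_le_card_mul_sum_sq (s := (Finset.univ : Finset L)) (f := Q k)
    rw [(hQ k).2] at this
    rw [inv_le_iff_one_le_mul₀ hcard]
    simp at this
    linarith
  nlinarith [mul_le_mul_of_nonneg_right h1 (sq_nonneg (x k - p k))]

lemma stationary_le
    {K L : Type*} [Fintype K] [Fintype L] [Nonempty K] [Nonempty L]
    [DecidableEq K] [DecidableEq L]
    (u : ((K × L) → ℝ) → ℝ)
    (W₁ W₂ : ((K × L) → ℝ) → ℝ)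
    (h₁ : IsStationaryDualSolution u W₁)
    (h₂ : IsStationaryDualSolution u W₂) (ε : ℝ) (hε : 0 < ε) :
    ∀ π ∈ stdSimplex ℝ (K × L), W₁ π - W₂ π ≤ ε := by
  obtain ⟨⟨C₁, hC₁⟩, -, hconv₁, hsub₁, -⟩ := h₁
  obtain ⟨⟨C₂, hC₂⟩, hconc₂, -, -, hsup₂⟩ := h₂
  have hcont : ContinuousOn (fun π => W₁ π - W₂ π + ε * ∑ kl, π kl ^ 2)
      (stdSimplex ℝ (K × L)) := by
    refine (hC₁.continuousOn.sub hC₂.continuousOn).add (Continuous.continuousOn ?_)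
    fun_prop
  have hne : (stdSimplex ℝ (K × L)).Nonempty :=
    ⟨_, single_mem_stdSimplex ℝ (Classical.arbitrary (K × L))⟩
  obtain ⟨π, hπ, hmax⟩ := (isCompact_stdSimplex ℝ (K × L)).exists_isMaxOn hne hcont
  have hmax' : ∀ x ∈ stdSimplex ℝ (K × L), W₁ x - W₂ x + ε * ∑ kl, x kl ^ 2
      ≤ W₁ π - W₂ π + ε * ∑ kl, π kl ^ 2 := fun x hx => hmax hx
  -- the K side
  have hK : W₁ π ≤ u π := by
    obtain ⟨p, Q, hp, hQ, hpQ⟩ := exists_disint π hπ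
    have hπe : tensKQ p Q = π := by ext ⟨k, l⟩; exact hpQ k l
    have hcard : (0 : ℝ) < Fintype.card L := by exact_mod_cast Fintype.card_pos
    obtain ⟨ζ, φ, hφ, hφd, hv, hm⟩ := exists_test (fun x => W₁ (tensKQ x Q))
      (fun x => W₂ (tensKQ x Q)) (hconc₂ Q hQ) C₂ C₂.2 p hp (by
        intro x hx
        have h1 := hC₂.dist_le_mul _ (tens_mem x Q hx hQ) _ (tens_mem p Q hp hQ)
        rw [Real.dist_eq, dist_eq_norm] at h1
        have h2 := mul_le_mul_of_nonneg_left (tens_norm x p Q hQ) C₂.2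
        have h3 := le_abs_self (W₂ (tensKQ x Q) - W₂ (tensKQ p Q))
        change (C₂ : ℝ) * _ ≤ (C₂ : ℝ) * _ at h2
        linarith)
      (ε * (Fintype.card L : ℝ)⁻¹) (by positivity)
      (fun k => -(ε * (2 * p k * ∑ l, Q k l ^ 2))) (by
        intro x hx
        have h1 := hmax' _ (tens_mem x Q hx hQ)
        rw [← hπe] at h1
        have h2 := mul_le_mul_of_nonneg_left (quad_bound p x Q hQ) hε.le
        have h3 : ∑ k, -(ε * (2 * p k * ∑ l, Q k l ^ 2)) * (x k - p k)
            = -(ε * ∑ k, (2 * p k * ∑ l, Q k l ^ 2) * (x k - p k)) := by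
          rw [Finset.mul_sum, ← Finset.sum_neg_distrib]
          exact Finset.sum_congr rfl fun k _ => by ring
        rw [h3]
        linarith)
    have h := hsub₁ Q hQ φ hφ ζ (Filter.Eventually.of_forall hm)
    have hd : (fun k => -(fderiv ℝ φ ζ (Pi.single k 1))) = p := by
      ext k
      rw [hφd]
      simp [Pi.single_apply]
    rw [hd, hφd, hπe] at h
    unfold WsharpK at h
    rw [hv] at h
    simp only [hπe] at h
    linarith
  -- the L side
  have hL : u π ≤ W₂ π := by
    have hπs : (fun lk : L × K => π lk.swap) ∈ stdSimplex ℝ (L × K) :=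
      ⟨fun lk => hπ.1 _, by rw [← hπ.2]; exact (Equiv.prodComm L K).sum_comp π⟩
    obtain ⟨q, P, hq, hP, hqP⟩ := exists_disint _ hπs
    have hπe : tensLP q P = π := by ext ⟨k, l⟩; exact hqP l k
    have hcard : (0 : ℝ) < Fintype.card K := by exact_mod_cast Fintype.card_pos
    have hsw : ∀ x : L → ℝ, ∑ kl, tensLP x P kl ^ 2 = ∑ lk, tensKQ x P lk ^ 2 := fun x =>
      (Equiv.prodComm K L).sum_comp (fun lk => tensKQ x P lk ^ 2)
    obtain ⟨ζ, φ, hφ, hφd, hv, hm⟩ := exists_test (fun x => -W₂ (tensLP x P))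
      (fun x => -W₁ (tensLP x P)) (hconv₁ P hP).neg C₁ C₁.2 q hq (by
        intro x hx
        have h1 := hC₁.dist_le_mul _ (tensLP_mem x P hx hP) _ (tensLP_mem q P hq hP)
        rw [Real.dist_eq, dist_eq_norm] at h1
        have h2 := mul_le_mul_of_nonneg_left (tensLP_norm x q P hP) C₁.2
        have h3 := neg_abs_le (W₁ (tensLP x P) - W₁ (tensLP q P))
        change (C₁ : ℝ) * _ ≤ (C₁ : ℝ) * _ at h2
        linarith)
      (ε * (Fintype.card K : ℝ)⁻¹) (by positivity)
      (fun k => -(ε * (2 * q k * ∑ l, P k l ^ 2))) (by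
        intro x hx
        have h1 := hmax' _ (tensLP_mem x P hx hP)
        rw [← hπe, hsw, hsw] at h1
        have h2 := mul_le_mul_of_nonneg_left (quad_bound q x P hP) hε.le
        have h3 : ∑ k, -(ε * (2 * q k * ∑ l, P k l ^ 2)) * (x k - q k)
            = -(ε * ∑ k, (2 * q k * ∑ l, P k l ^ 2) * (x k - q k)) := by
          rw [Finset.mul_sum, ← Finset.sum_neg_distrib]
          exact Finset.sum_congr rfl fun k _ => by ring
        rw [h3]
        linarith)
    have hflat : ∀ z, WflatL W₂ P z
        = -sSup ((fun x => -W₂ (tensLP x P) - ∑ k, x k * z k) '' stdSimplex ℝ L) := by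
      intro z
      unfold WflatL
      rw [Real.sInf_def, ← Set.image_neg_eq_neg, Set.image_image]
      congr 3
      ext x
      ring
    have hmin : IsLocalMin (fun z => WflatL W₂ P z - (fun y => -φ y) z) ζ := by
      refine Filter.Eventually.of_forall fun z => ?_
      have := hm z
      simp only [hflat]
      linarith
    have h := hsup₂ P hP (fun y => -φ y) hφ.neg ζ hmin
    have hd' : ∀ v, fderiv ℝ (fun y => -φ y) ζ v = ∑ k, q k * v k := by
      intro v
      rw [fderiv_fun_neg]
      simp [hφd]
    have hd : (fun k => fderiv ℝ (fun y => -φ y) ζ (Pi.single k 1)) = q := by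
      ext k
      rw [hd']
      simp [Pi.single_apply]
    rw [hd, hd', hπe, hflat, hv] at h
    simp only [hπe] at h
    linarith
  intro x hx
  have h := hmax' x hx
  have h1 : 0 ≤ ∑ kl, x kl ^ 2 := Finset.sum_nonneg fun _ _ => sq_nonneg _
  have h2 : ∑ kl, π kl ^ 2 ≤ 1 := by
    rw [← hπ.2]
    refine Finset.sum_le_sum fun kl _ => ?_
    have := entry_le_one π hπ kl
    rw [abs_of_nonneg (hπ.1 kl)] at this
    nlinarith [hπ.1 kl]
  have h3 := mul_le_mul_of_nonneg_left h2 hε.le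
  have h4 := mul_nonneg hε.le h1
  linarith



/-- Uniqueness in the stationary characterization: two stationary dual solutions for
the same Lipschitz non-revealing value `u` coincide on `Δ(K×L)`. -/
theorem stationary_uniqueness
    {K L : Type*} [Fintype K] [Fintype L] [Nonempty K] [Nonempty L]
    [DecidableEq K] [DecidableEq L]
    (u : ((K × L) → ℝ) → ℝ)
    (hu : ∃ Cu : NNReal, LipschitzOnWith Cu u (stdSimplex ℝ (K × L)))
    (W₁ W₂ : ((K × L) → ℝ) → ℝ)
    (h₁ : IsStationaryDualSolution u W₁)
    (h₂ : IsStationaryDualSolution u W₂) :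
    ∀ π ∈ stdSimplex ℝ (K × L), W₁ π = W₂ π := by
  intro π hπ
  apply le_antisymm
  · refine le_of_forall_pos_le_add fun ε hε => ?_
    have := stationary_le u W₁ W₂ h₁ h₂ ε hε π hπ
    linarith
  · refine le_of_forall_pos_le_add fun ε hε => ?_
    have := stationary_le u W₂ W₁ h₂ h₁ ε hε π hπ
    linarith
end
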